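/- arXiv:math/0503141 — 3 statements merged into one kernel-verified Lean document; each statement's English description precedes it below -/
import Mathlib

section
/- Let f: ℝⁿ × Γ → ℝⁿ be continuous, Γ finite. Suppose x_k: ℝ₊ → ℝⁿ satisfy x_k(t) = x_k(0) + ∫₀ᵗ f(x_k(s), σ_k(s)) ds with |x_k(t)| ≤ M for all t, k, that x_k → x* uniformly on compact subsets of ℝ₊, and σ_k(t) → σ*(t) for almost all t ≥ 0, where σ* is a switching signal. Then x*(t) = x*(0) + ∫₀ᵗ f(x*(s), σ*(s)) ds for all t ≥ 0, i.e., x* is a solution of the switched system corresponding to σ*. -/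
/-!
The integral equation passes to the limit by dominated convergence. The limit trajectory is
continuous, so it maps each `[0, t]` onto a compact set `K`; since `Γ` is compact, `f` is bounded on
`U × Γ` for some neighbourhood `U` of `K` (tube lemma), and uniform convergence puts `x k` in `U`
from some index on. Continuity of `f` gives pointwise convergence of the integrands almost
everywhere, and they are measurable because a piecewise constant signal is continuous off a
countable set.
-/

open Filter Set MeasureTheory

/-- The switching times (points of left-discontinuity) of a signal `σ` on `(0,∞)`. -/
def SwitchTimes {Γ : Type*} (σ : ℝ → Γ) : Set ℝ :=
  {s | 0 < s ∧ ∀ ε > 0, ∃ u, s - ε < u ∧ u < s ∧ σ u ≠ σ s}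

/-- A piecewise constant, right-continuous switching signal: locally constant from the
right at every time, with finitely many switching times in every bounded interval. -/
def PiecewiseConstantSignal {Γ : Type*} (σ : ℝ → Γ) : Prop :=
  (∀ s : ℝ, ∃ ε > 0, ∀ u : ℝ, s ≤ u → u < s + ε → σ u = σ s) ∧
  ∀ T : ℝ, (SwitchTimes σ ∩ Set.Ioo 0 T).Finite

open Function Topology TopologicalSpace Uniformity

namespace PiecewiseConstantSignal

variable {Γ : Type*} {σ : ℝ → Γ}

theorem countable_switchTimes (hσ : PiecewiseConstantSignal σ) : (SwitchTimes σ).Countable := by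
  have hcover : SwitchTimes σ ⊆ ⋃ N : ℕ, SwitchTimes σ ∩ Ioo 0 (N : ℝ) := fun s hs ↦
    let ⟨N, hN⟩ := exists_nat_gt s
    mem_iUnion.2 ⟨N, hs, hs.1, hN⟩
  exact (countable_iUnion fun N : ℕ ↦ (hσ.2 N).countable).mono hcover

theorem eventually_eq_of_notMem_switchTimes (hσ : PiecewiseConstantSignal σ) {s : ℝ} (hs : 0 < s)
    (hsw : s ∉ SwitchTimes σ) : ∀ᶠ u in 𝓝 s, σ u = σ s := by
  obtain ⟨δ, hδ, hright⟩ := hσ.1 s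
  obtain ⟨ε, hε, hleft⟩ : ∃ ε > 0, ∀ u, s - ε < u → u < s → σ u = σ s := by
    by_contra! hcon
    exact hsw ⟨hs, hcon⟩
  filter_upwards [Ioo_mem_nhds (sub_lt_self s hε) (lt_add_of_pos_right s hδ)] with u hu
  rcases lt_or_ge u s with hus | hsu
  · exact hleft u hu.1 hus
  · exact hright u hsu hu.2

theorem continuousOn [TopologicalSpace Γ] (hσ : PiecewiseConstantSignal σ) :
    ContinuousOn σ (Ioi 0 \ SwitchTimes σ) := fun _ hs ↦
  (tendsto_nhds_of_eventually_eq
    (hσ.eventually_eq_of_notMem_switchTimes hs.1 hs.2)).mono_left nhdsWithin_le_nhds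

theorem aestronglyMeasurable [TopologicalSpace Γ] [PseudoMetrizableSpace Γ]
    (hσ : PiecewiseConstantSignal σ) :
    AEStronglyMeasurable σ (volume.restrict (Ici (0 : ℝ))) := by
  have hcount := hσ.countable_switchTimes
  have hae : (Ioi 0 \ SwitchTimes σ : Set ℝ) =ᵐ[volume] Ici (0 : ℝ) :=
    (sdiff_null_ae_eq_self (hcount.measure_zero volume)).trans Ioi_ae_eq_Ici
  rw [← Measure.restrict_congr_set hae]
  exact hσ.continuousOn.aestronglyMeasurable (measurableSet_Ioi.diff hcount.measurableSet)

end PiecewiseConstantSignal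

section UniformLimits

variable {ι α : Type*} {l : Filter ι}

theorem eventually_mapsTo_of_tendstoUniformlyOn {X : Type*} [UniformSpace X] {x : ι → α → X}
    {x' : α → X} {K : Set α} {U : Set X} (hx : TendstoUniformlyOn x x' l K)
    (hK : IsCompact (x' '' K)) (hU : IsOpen U) (hKU : x' '' K ⊆ U) :
    ∀ᶠ k in l, MapsTo (x k) K U := by
  obtain ⟨V, hV, hVU⟩ :=
    (hK.nhdsSet_basis_uniformity (𝓤 X).basis_sets).mem_iff.1 (hU.mem_nhdsSet.2 hKU)
  filter_upwards [hx V hV] with k hk s hs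
  exact hVU (mem_biUnion (mem_image_of_mem x' hs) (hk s hs))

theorem exists_eventually_forall_norm_le_of_tendstoUniformlyOn {X Γ E : Type*} [UniformSpace X]
    [TopologicalSpace Γ] [CompactSpace Γ] [SeminormedAddCommGroup E] {f : X → Γ → E}
    (hf : Continuous (uncurry f)) {x : ι → α → X} {x' : α → X} {K : Set α}
    (hx : TendstoUniformlyOn x x' l K) (hK : IsCompact (x' '' K)) :
    ∃ C, ∀ᶠ k in l, ∀ s ∈ K, ∀ γ, ‖f (x k s) γ‖ ≤ C := by
  obtain ⟨W, hKW, hW, hfW⟩ :=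
    Metric.exists_isOpen_isBounded_image_of_isCompact_of_forall_continuousAt
      (hK.prod isCompact_univ) fun _ _ ↦ hf.continuousAt
  obtain ⟨C, hC⟩ := hfW.exists_norm_le
  obtain ⟨U, _, hU, _, hKU, huniv, hUW⟩ := generalized_tube_lemma hK isCompact_univ hW hKW
  refine ⟨C, ?_⟩
  filter_upwards [eventually_mapsTo_of_tendstoUniformlyOn hx hK hU hKU] with k hk s hs γ
  have hmem : (x k s, γ) ∈ W := hUW ⟨hk hs, huniv (mem_univ γ)⟩
  exact hC _ (mem_image_of_mem (uncurry f) hmem)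

theorem tendsto_intervalIntegral_of_tendstoUniformlyOn [l.NeBot] [l.IsCountablyGenerated]
    {X Γ E : Type*} [PseudoMetricSpace X] [TopologicalSpace Γ] [CompactSpace Γ]
    [NormedAddCommGroup E] [NormedSpace ℝ E] {μ : Measure ℝ} [IsLocallyFiniteMeasure μ] {a b : ℝ}
    {f : X → Γ → E} (hf : Continuous (uncurry f)) {x : ι → ℝ → X} {x' : ℝ → X}
    {σ : ι → ℝ → Γ} {σ' : ℝ → Γ} (hcont : ∀ k, ContinuousOn (x k) (uIcc a b))
    (hx : TendstoUniformlyOn x x' l (uIcc a b))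
    (hmeas : ∀ k, AEStronglyMeasurable (σ k) (μ.restrict (uIoc a b)))
    (hσ : ∀ᵐ s ∂μ.restrict (uIoc a b), Tendsto (fun k ↦ σ k s) l (𝓝 (σ' s))) :
    Tendsto (fun k ↦ ∫ s in a..b, f (x k s) (σ k s) ∂μ) l
      (𝓝 (∫ s in a..b, f (x' s) (σ' s) ∂μ)) := by
  have hcont' : ContinuousOn x' (uIcc a b) := hx.continuousOn (Frequently.of_forall hcont)
  obtain ⟨C, hC⟩ := exists_eventually_forall_norm_le_of_tendstoUniformlyOn hf hx
    (isCompact_uIcc.image_of_continuousOn hcont')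
  refine intervalIntegral.tendsto_integral_filter_of_dominated_convergence (fun _ ↦ C) ?_ ?_
    intervalIntegrable_const ?_
  · refine .of_forall fun k ↦ hf.comp_aestronglyMeasurable (.prodMk ?_ (hmeas k))
    exact ((hcont k).mono uIoc_subset_uIcc).aestronglyMeasurable measurableSet_uIoc
  · filter_upwards [hC] with k hk
    exact .of_forall fun s hs ↦ hk s (uIoc_subset_uIcc hs) (σ k s)
  · filter_upwards [(ae_restrict_iff' measurableSet_uIoc).1 hσ] with s hσs hs
    have hxs := hx.tendsto_at (uIoc_subset_uIcc hs)
    exact (hf.tendsto (x' s, σ' s)).comp (hxs.prodMk_nhds (hσs hs))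

end UniformLimits

/-- Solutions on `ℝ₊` of the switched system `ẋ = f(x, σ)`, in integral form. Continuity of `x` is
not part of the definition, and the integral is `0` by convention where the integrand is not
integrable. -/
def IsSwitchedSolution {Γ E : Type*} [NormedAddCommGroup E] [NormedSpace ℝ E] (f : E → Γ → E)
    (σ : ℝ → Γ) (x : ℝ → E) : Prop :=
  ∀ t : ℝ, 0 ≤ t → x t = x 0 + ∫ s in (0 : ℝ)..t, f (x s) (σ s)

theorem stmt6_general {ι Γ E : Type*} {l : Filter ι} [l.NeBot] [l.IsCountablyGenerated]
    [TopologicalSpace Γ] [CompactSpace Γ] [NormedAddCommGroup E] [NormedSpace ℝ E] [CompleteSpace E]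
    {f : E → Γ → E} (hf : Continuous (uncurry f)) {x : ι → ℝ → E} {σ : ι → ℝ → Γ}
    (hmeas : ∀ k, AEStronglyMeasurable (σ k) (volume.restrict (Ici (0 : ℝ))))
    (hcont : ∀ k, ContinuousOn (x k) (Ici 0)) (hsol : ∀ k, IsSwitchedSolution f (σ k) (x k))
    {x' : ℝ → E} {σ' : ℝ → Γ} (hx : ∀ T : ℝ, TendstoUniformlyOn x x' l (Icc 0 T))
    (hσ : ∀ᵐ t ∂volume.restrict (Ici (0 : ℝ)), Tendsto (fun k ↦ σ k t) l (𝓝 (σ' t))) :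
    IsSwitchedSolution f σ' x' := by
  intro t ht
  have hsub : uIoc 0 t ⊆ Ici 0 := uIoc_of_le ht ▸ fun _ hs ↦ hs.1.le
  have hIcc : uIcc 0 t = Icc 0 t := uIcc_of_le ht
  have hint : Tendsto (fun k ↦ ∫ s in (0 : ℝ)..t, f (x k s) (σ k s)) l
      (𝓝 (∫ s in (0 : ℝ)..t, f (x' s) (σ' s))) :=
    tendsto_intervalIntegral_of_tendstoUniformlyOn hf
      (fun k ↦ (hcont k).mono (hIcc ▸ Icc_subset_Ici_self)) (hIcc ▸ hx t)
      (fun k ↦ (hmeas k).mono_set hsub) (ae_restrict_of_ae_restrict_of_subset hsub hσ)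
  have hx0 : Tendsto (fun k ↦ x k 0) l (𝓝 (x' 0)) := (hx t).tendsto_at (left_mem_Icc.2 ht)
  have hxt : Tendsto (fun k ↦ x k t) l (𝓝 (x' t)) := (hx t).tendsto_at (right_mem_Icc.2 ht)
  exact tendsto_nhds_unique hxt ((hx0.add hint).congr fun k ↦ (hsol k t ht).symm)

/-- passage to the limit in the integral equation. If trajectories `x k`
of `ẋ = f(x, σ k)` are uniformly bounded, converge uniformly on compact subsets of
`ℝ₊` to `x'`, and `σ k (t) → σ' (t)` for almost all `t ≥ 0` (eventual equality, `Γ`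
being discrete), with `σ'` a switching signal, then `x'` satisfies the integral
equation for `σ'`, i.e. is a solution of the switched system corresponding to `σ'`. -/
theorem stmt6 {n m : ℕ}
    (f : EuclideanSpace ℝ (Fin n) → Fin m → EuclideanSpace ℝ (Fin n))
    (hf : ∀ γ : Fin m, Continuous (fun ξ => f ξ γ))
    (x : ℕ → ℝ → EuclideanSpace ℝ (Fin n)) (σ : ℕ → ℝ → Fin m)
    (hsig : ∀ k, PiecewiseConstantSignal (σ k))
    (hcont : ∀ k, ContinuousOn (x k) (Set.Ici 0))
    (heq : ∀ k, ∀ t : ℝ, 0 ≤ t →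
      x k t = x k 0 + ∫ s in (0:ℝ)..t, f (x k s) (σ k s))
    (M : ℝ) (hM : ∀ k, ∀ t : ℝ, 0 ≤ t → ‖x k t‖ ≤ M)
    (x' : ℝ → EuclideanSpace ℝ (Fin n)) (σ' : ℝ → Fin m)
    (hsig' : PiecewiseConstantSignal σ')
    (hconv : ∀ K : Set ℝ, K ⊆ Set.Ici 0 → IsCompact K →
      TendstoUniformlyOn x x' atTop K)
    (haes : ∀ᵐ t ∂(volume.restrict (Set.Ici (0:ℝ))), ∀ᶠ k in atTop, σ k t = σ' t) :
    ∀ t : ℝ, 0 ≤ t → x' t = x' 0 + ∫ s in (0:ℝ)..t, f (x' s) (σ' s) :=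
  stmt6_general (continuous_prod_of_discrete_right.2 hf)
    (fun k ↦ (hsig k).aestronglyMeasurable) hcont heq
    (fun _ ↦ hconv _ Icc_subset_Ici_self isCompact_Icc)
    (by simpa only [nhds_discrete, tendsto_pure])
end

section
/- LaSalle invariance principle for switched systems: let χ be a closed covering of ℝⁿ, Ω ⊆ ℝⁿ open, V: Ω × Γ → ℝ continuous. Suppose (x,σ) ∈ 𝒯_V ∩ 𝒯[χ] ∩ 𝒯_a[τ_D,N₀] and x(t) ∈ B for all t ≥ 0 for some compact B ⊂ Ω. Let M ⊆ ℝⁿ × Γ be the largest weakly-invariant set with respect to 𝒯_V* ∩ 𝒯[χ] ∩ 𝒯_a[τ_D,N₀] contained in Ω × Γ. Then d(x(t), π₁(M)) → 0 as t → ∞. -/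
open Filter Set MeasureTheory Metric

/-- `σ` is locally constant from the right at every time (right-continuity and
piecewise constancy from the right). -/
def RightLocConst {Γ : Type*} (σ : ℝ → Γ) : Prop :=
  ∀ s : ℝ, ∃ ε > 0, ∀ u : ℝ, s ≤ u → u < s + ε → σ u = σ s

/-- `σ` has average dwell-time `τD` and chatter bound `N₀`: the number of switching
times in any open interval `(τ₁,τ₂) ⊆ ℝ₊` is at most `N₀ + (τ₂ - τ₁)/τD`. -/
def HasADT {Γ : Type*} (σ : ℝ → Γ) (τD : ℝ) (N₀ : ℕ) : Prop :=
  ∀ τ₁ τ₂ : ℝ, 0 ≤ τ₁ → τ₁ < τ₂ →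
    (Nat.card ↥(SwitchTimes σ ∩ Set.Ioo τ₁ τ₂) : ℝ) ≤ (N₀ : ℝ) + (τ₂ - τ₁) / τD

/-- A switching signal with average dwell-time `τD > 0` and chatter bound `N₀`:
piecewise constant, right-continuous, with the average dwell-time property. -/
def IsSwitchingSignal {Γ : Type*} (σ : ℝ → Γ) (τD : ℝ) (N₀ : ℕ) : Prop :=
  RightLocConst σ ∧ HasADT σ τD N₀
/-- A trajectory of the switched system `ẋ = f(x,σ)`: a continuous curve satisfying the
integral equation on `[0,∞)`. -/
def IsTrajectory {n m : ℕ}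
    (f : EuclideanSpace ℝ (Fin n) → Fin m → EuclideanSpace ℝ (Fin n))
    (x : ℝ → EuclideanSpace ℝ (Fin n)) (σ : ℝ → Fin m) : Prop :=
  ContinuousOn x (Set.Ici 0) ∧
  ∀ t : ℝ, 0 ≤ t → x t = x 0 + ∫ s in (0:ℝ)..t, f (x s) (σ s)

/-- The ω-limit set of `x : ℝ → ℝⁿ` (restricted to `[0,∞)`). -/
def OmegaLimit {n : ℕ} (x : ℝ → EuclideanSpace ℝ (Fin n)) : Set (EuclideanSpace ℝ (Fin n)) :=
  {ξ | ∃ s : ℕ → ℝ, StrictMono s ∧ (∀ k, 0 ≤ s k) ∧ Filter.Tendsto s Filter.atTop Filter.atTop ∧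
    Filter.Tendsto (fun k => x (s k)) Filter.atTop (nhds ξ)}

/-- `τ¹_σ(t)`: the first switching time of `σ` strictly greater than `t`
(`∞`, i.e. `⊤ : EReal`, if there is none). -/
noncomputable def tau1 {Γ : Type*} (σ : ℝ → Γ) (t : ℝ) : EReal :=
  sInf ((fun s : ℝ => (s : EReal)) '' (SwitchTimes σ ∩ Set.Ioi t))

/-- `Ω^♯(x,σ)`: the pairs `(ξ,γ)` for which there is a strictly increasing unbounded
sequence of nonnegative times `s k` with `τ¹_σ(s k) - s k → r` for some `r ∈ (0,∞]`,
`x (s k) → ξ` and `σ (s k) → γ` (eventually equal, `Γ` being discrete). -/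
def OmegaSharp {n m : ℕ} (x : ℝ → EuclideanSpace ℝ (Fin n)) (σ : ℝ → Fin m) :
    Set (EuclideanSpace ℝ (Fin n) × Fin m) :=
  {p | ∃ s : ℕ → ℝ, StrictMono s ∧ (∀ k, 0 ≤ s k) ∧
    Filter.Tendsto s Filter.atTop Filter.atTop ∧
    (∃ r : EReal, 0 < r ∧
      Filter.Tendsto (fun k => tau1 σ (s k) - ((s k : ℝ) : EReal)) Filter.atTop (nhds r)) ∧
    Filter.Tendsto (fun k => x (s k)) Filter.atTop (nhds p.1) ∧
    (∀ᶠ k in Filter.atTop, σ (s k) = p.2)}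
/-- The state constraint `x(t) ∈ χ_{σ(t)}` for all `t ≥ 0` (membership in `𝒯[χ]`). -/
def InTchi {n m : ℕ} (χ : Fin m → Set (EuclideanSpace ℝ (Fin n)))
    (x : ℝ → EuclideanSpace ℝ (Fin n)) (σ : ℝ → Fin m) : Prop :=
  ∀ t : ℝ, 0 ≤ t → x t ∈ χ (σ t)

/-- Membership in `𝒯_V`: the state stays in `Ω` and `V(x(·),σ(·))` does not increase
between times carrying the same switching index. -/
def InTV {n m : ℕ} (Ω : Set (EuclideanSpace ℝ (Fin n)))
    (V : EuclideanSpace ℝ (Fin n) → Fin m → ℝ)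
    (x : ℝ → EuclideanSpace ℝ (Fin n)) (σ : ℝ → Fin m) : Prop :=
  (∀ t : ℝ, 0 ≤ t → x t ∈ Ω) ∧
  ∀ t t' : ℝ, 0 ≤ t → t ≤ t' → σ t = σ t' →
    V (x t') (σ t') ≤ V (x t) (σ t)

/-- Membership in `𝒯_V^*`: in `𝒯_V`, and `V(x(·),σ(·))` takes equal values at any two
times carrying the same switching index. -/
def InTVstar {n m : ℕ} (Ω : Set (EuclideanSpace ℝ (Fin n)))
    (V : EuclideanSpace ℝ (Fin n) → Fin m → ℝ)
    (x : ℝ → EuclideanSpace ℝ (Fin n)) (σ : ℝ → Fin m) : Prop :=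
  InTV Ω V x σ ∧
  ∀ t t' : ℝ, 0 ≤ t → 0 ≤ t' → σ t = σ t' →
    V (x t) (σ t) = V (x t') (σ t')

/-- Weak invariance of a set `M ⊆ ℝⁿ × Γ` with respect to a family `C` of trajectories:
through every point of `M` there is a trajectory of `C` remaining in `M`. -/
def WeaklyInvariant {n m : ℕ}
    (C : Set ((ℝ → EuclideanSpace ℝ (Fin n)) × (ℝ → Fin m)))
    (M : Set (EuclideanSpace ℝ (Fin n) × Fin m)) : Prop :=
  ∀ p ∈ M, ∃ q ∈ C, q.1 0 = p.1 ∧ q.2 0 = p.2 ∧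
    ∀ t : ℝ, 0 ≤ t → (q.1 t, q.2 t) ∈ M

/-!
As `x` stays in a compact set it is Lipschitz, so along any ultrafilter tending to `∞` its
translates converge. By the dwell-time bound the times near which the translates of `σ` keep
switching satisfy the same bound, hence are locally finite; off them the translates of `σ` are
eventually locally constant and therefore converge as well. The limit pair solves the differential
equation off a countable set, so it is a trajectory, with the same average dwell-time. Along a
limit pair `V` is constant on each mode, because `V (x ·) γ` is monotone on `{t | σ t = γ}` and so
has only one limit value there. Thus the limit pairs fill a weakly invariant set, and `x`
approaches it.
-/

open scoped Interval Topology Uniformity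

section SetLemmas

variable {α : Type*} {S : Set α}

theorem countable_of_eventually_nhdsGT_notMem [LinearOrder α] [TopologicalSpace α]
    [OrderTopology α] [SecondCountableTopology α] (hS : ∀ t ∈ S, ∀ᶠ u in 𝓝[>] t, u ∉ S) :
    S.Countable := by
  refine Countable.mono (fun t ht => ?_) (countable_setOfPred_isolated_right_within (s := S))
  refine ⟨ht, ?_⟩
  rw [inter_comm, nhdsWithin_inter', ← disjoint_iff, disjoint_principal_right]
  exact hS t ht

theorem finite_and_ncard_le_of_forall_finset {c : ℝ}
    (h : ∀ T : Finset α, ↑T ⊆ S → (T.card : ℝ) ≤ c) : S.Finite ∧ (S.ncard : ℝ) ≤ c := by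
  have hfin : S.Finite := by
    by_contra hinf
    obtain ⟨k, hk⟩ := exists_nat_gt c
    obtain ⟨T, hTS, rfl⟩ := Set.Infinite.exists_subset_card_eq hinf k
    exact (h T hTS).not_gt hk
  refine ⟨hfin, ?_⟩
  rw [ncard_eq_toFinset_card S hfin]
  exact h _ hfin.coe_toFinset.subset

theorem isClosed_setOf_forall_finset_card_le [LinearOrder α] [TopologicalSpace α]
    [ClosedIicTopology α] (S : Set α) (c : ℝ) :
    IsClosed {q | ∀ T : Finset α, ↑T ⊆ S ∩ Iio q → (T.card : ℝ) ≤ c} := by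
  simp only [ofPred_forall]
  refine isClosed_iInter fun T => isClosed_imp ?_ isClosed_const
  have : {q | ↑T ⊆ S ∩ Iio q} = {_q | ↑T ⊆ S} ∩ ⋂ z ∈ T, Ioi z := by
    ext q
    simp [subset_def, forall_and]
  rw [this]
  exact isOpen_const.inter (isOpen_biInter_finset fun z _ => isOpen_Ioi)

theorem exists_forall_norm_le_of_continuousOn {X Γ E : Type*} [TopologicalSpace X] [Finite Γ]
    [SeminormedAddCommGroup E] {f : X → Γ → E} {K : Set X} (hK : IsCompact K)
    (hf : ∀ γ, ContinuousOn (f · γ) K) : ∃ C, ∀ ξ ∈ K, ∀ γ, ‖f ξ γ‖ ≤ C := by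
  choose C hC using fun γ => hK.exists_bound_of_continuousOn (hf γ)
  obtain ⟨M, hM⟩ := Finite.exists_le C
  exact ⟨M, fun ξ hξ γ => (hC γ ξ hξ).trans (hM γ)⟩

end SetLemmas

section SwitchingSignals

variable {Γ : Type*} {σ : ℝ → Γ} {τD : ℝ} {N₀ : ℕ} {a b t : ℝ}

theorem RightLocConst.eventually_nhdsGT_notMem_switchTimes (hσ : RightLocConst σ) (t : ℝ) :
    ∀ᶠ u in 𝓝[>] t, u ∉ SwitchTimes σ := by
  obtain ⟨ε, hε, hconst⟩ := hσ t
  filter_upwards [Ioo_mem_nhdsGT (lt_add_of_pos_right t hε)] with u hu hswitch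
  obtain ⟨w, hw, hwu, hne⟩ := hswitch.2 (u - t) (sub_pos.2 hu.1)
  exact hne ((hconst w (by linarith) (by linarith [hu.2])).trans (hconst u hu.1.le hu.2).symm)

theorem RightLocConst.countable_switchTimes (hσ : RightLocConst σ) : (SwitchTimes σ).Countable :=
  countable_of_eventually_nhdsGT_notMem fun t _ => hσ.eventually_nhdsGT_notMem_switchTimes t

theorem RightLocConst.eventually_eq (hσ : RightLocConst σ) (ht : 0 < t)
    (hswitch : t ∉ SwitchTimes σ) : ∀ᶠ u in 𝓝 t, σ u = σ t := by
  obtain ⟨ε, hε, hleft⟩ : ∃ ε > 0, ∀ u, t - ε < u → u < t → σ u = σ t := by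
    by_contra! h
    exact hswitch ⟨ht, h⟩
  obtain ⟨δ, hδ, hright⟩ := hσ t
  filter_upwards [Ioo_mem_nhds (sub_lt_self t hε) (lt_add_of_pos_right t hδ)] with u hu
  rcases lt_or_ge u t with hut | htu
  · exact hleft u hu.1 hut
  · exact hright u htu hu.2

theorem RightLocConst.eq_of_disjoint_switchTimes (hσ : RightLocConst σ) {I : Set ℝ}
    (hI : IsPreconnected I) (hpos : I ⊆ Ioi 0) (hdisj : Disjoint I (SwitchTimes σ))
    {u v : ℝ} (hu : u ∈ I) (hv : v ∈ I) : σ u = σ v :=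
  hI.induction₂ (fun u v => σ u = σ v)
    (fun _ hu => nhdsWithin_le_nhds
      ((hσ.eventually_eq (hpos hu) (hdisj.notMem_of_mem_left hu)).mono fun _ => Eq.symm))
    (fun _ _ _ _ _ _ => Eq.trans) (fun _ _ _ _ => Eq.symm) hu hv

theorem switchTimes_inter_Iio (σ : ℝ → Γ) (b : ℝ) :
    SwitchTimes σ ∩ Iio b = SwitchTimes σ ∩ Ioo 0 b := by
  ext s
  exact ⟨fun h => ⟨h.1, h.1.1, h.2⟩, fun h => ⟨h.1, h.2.2⟩⟩

theorem HasADT.card_le_of_finite (hσ : HasADT σ τD N₀) (ha : 0 ≤ a) (hab : a < b)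
    (hfin : (SwitchTimes σ ∩ Ioo a b).Finite) {T : Finset ℝ} (hT : ↑T ⊆ SwitchTimes σ ∩ Ioo a b) :
    (T.card : ℝ) ≤ N₀ + (b - a) / τD := by
  refine le_trans ?_ (hσ a b ha hab)
  rw [Nat.card_coe_set_eq, Nat.cast_le, ← ncard_coe_finset]
  exact ncard_le_ncard hT hfin

-- `Nat.card` of an infinite set is `0`, so the dwell-time bound does not yield finiteness by
-- itself: the bound is propagated from `0` to the right by continuous induction.
theorem IsSwitchingSignal.finite_switchTimes_inter_Iio (hτ : 0 < τD)
    (hσ : IsSwitchingSignal σ τD N₀) (b : ℝ) : (SwitchTimes σ ∩ Iio b).Finite := by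
  rcases le_or_gt b 0 with hb | hb
  · exact finite_empty.subset fun s hs => (hs.1.1.trans hs.2).not_ge hb
  set A : Set ℝ :=
    {q | ∀ T : Finset ℝ, ↑T ⊆ SwitchTimes σ ∩ Iio q → (T.card : ℝ) ≤ N₀ + b / τD}
  have hzero : 0 ∈ A := fun T hT => by
    have hT_empty : T = ∅ := Finset.eq_empty_of_forall_notMem fun s hs =>
      (hT hs).1.1.not_gt (hT hs).2
    simp only [hT_empty, Finset.card_empty, Nat.cast_zero]
    positivity
  have hstep : ∀ p ∈ A ∩ Ico 0 b, A ∈ 𝓝[>] p := by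
    rintro p ⟨hpA, hp0, hpb⟩
    obtain ⟨c, hc, hgap⟩ :=
      mem_nhdsGT_iff_exists_Ioo_subset.1 (hσ.1.eventually_nhdsGT_notMem_switchTimes p)
    filter_upwards [Ioo_mem_nhdsGT (lt_min hc hpb)] with q hq
    have hfin : (SwitchTimes σ ∩ Iio q).Finite := by
      refine ((finite_and_ncard_le_of_forall_finset hpA).1.insert p).subset ?_
      rintro s ⟨hs, hsq⟩
      rcases lt_trichotomy s p with hsp | rfl | hps
      · exact Or.inr ⟨hs, hsp⟩
      · exact Or.inl rfl
      · exact absurd hs (hgap ⟨hps, hsq.trans (hq.2.trans_le (min_le_left c b))⟩)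
    intro T hT
    rw [switchTimes_inter_Iio] at hfin hT
    refine (hσ.2.card_le_of_finite le_rfl (hp0.trans_lt hq.1) hfin hT).trans ?_
    gcongr
    linarith [hq.2, min_le_right c b]
  have hbA : b ∈ A := IsClosed.Icc_subset_of_forall_mem_nhdsWithin
    ((isClosed_setOf_forall_finset_card_le _ _).inter isClosed_Icc) hzero hstep
    (right_mem_Icc.2 hb.le)
  exact (finite_and_ncard_le_of_forall_finset hbA).1

theorem IsSwitchingSignal.card_le (hτ : 0 < τD) (hσ : IsSwitchingSignal σ τD N₀) (ha : 0 ≤ a)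
    (hab : a < b) {T : Finset ℝ} (hT : ↑T ⊆ SwitchTimes σ ∩ Ioo a b) :
    (T.card : ℝ) ≤ N₀ + (b - a) / τD :=
  hσ.2.card_le_of_finite ha hab ((hσ.finite_switchTimes_inter_Iio hτ b).subset
    (inter_subset_inter_right _ Ioo_subset_Iio_self)) hT

theorem IsSwitchingSignal.card_le_of_eventually_exists (hτ : 0 < τD)
    (hσ : IsSwitchingSignal σ τD N₀) {F : Filter ℝ} [F.NeBot] (hF : F ≤ atTop) (hab : a < b)
    {T : Finset ℝ} (hT : ↑T ⊆ Ioo a b)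
    (hnear : ∀ t ∈ T, ∀ W ∈ 𝓝 t, ∀ᶠ s in F, ∃ w ∈ W, s + w ∈ SwitchTimes σ) :
    (T.card : ℝ) ≤ N₀ + (b - a) / τD := by
  classical
  obtain ⟨W, hW, hdisj⟩ := T.finite_toSet.t2_separation
  have hswitch : ∀ᶠ s in F, ∀ t ∈ T, ∃ w ∈ W t ∩ Ioo a b, s + w ∈ SwitchTimes σ :=
    (Finset.eventually_all T).2 fun t ht => hnear t ht _ <|
      inter_mem ((hW t).2.mem_nhds (hW t).1) (isOpen_Ioo.mem_nhds (hT ht))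
  obtain ⟨s, hs, hsa⟩ := (hswitch.and (hF (eventually_ge_atTop (-a)))).exists
  choose! w hwW hws using hs
  have hinj : InjOn (fun t => s + w t) T := fun t ht t' ht' heq =>
    hdisj.elim_set ht ht' (w t) (hwW t ht).1 (add_left_cancel heq ▸ (hwW t' ht').1)
  rw [← Finset.card_image_of_injOn hinj, ← add_sub_add_left_eq_sub b a s]
  refine hσ.card_le hτ (by linarith) (by linarith) ?_
  rw [Finset.coe_image, image_subset_iff]
  exact fun t ht =>
    ⟨hws t ht, add_lt_add_right (hwW t ht).2.1 s, add_lt_add_right (hwW t ht).2.2 s⟩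

end SwitchingSignals

section LimitSignals

variable {Γ : Type*} {σ ρ : ℝ → Γ} {F : Filter ℝ} {γ γ' : Γ} {a b t : ℝ}

/-- Along `F`, the translates `σ (s + ·)` take the constant value `γ` on a neighbourhood of `t`
independent of `s`: locally uniform convergence at `t` for functions with discrete values. -/
def SettlesAt (F : Filter ℝ) (σ : ℝ → Γ) (t : ℝ) (γ : Γ) : Prop :=
  ∀ᶠ p in F ×ˢ 𝓝 t, σ (p.1 + p.2) = γ

/-- The times at which the translates of `σ` do not settle along `F`; switching times of the
translates accumulate there. -/
def UnsettledTimes (F : Filter ℝ) (σ : ℝ → Γ) : Set ℝ :=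
  {t | ∀ γ, ¬ SettlesAt F σ t γ}

/-- `ρ` is the limit along `F` of the translates `σ (s + ·)`. Its value at `t` is prescribed by the
times just after `t`, which makes it right-continuous also at the unsettled times. -/
def IsLimitSignal (F : Filter ℝ) (σ ρ : ℝ → Γ) : Prop :=
  ∀ t, ∀ᶠ u in 𝓝[>] t, SettlesAt F σ u (ρ t)

theorem settlesAt_iff_exists_nhds : SettlesAt F σ t γ ↔
    ∃ W ∈ 𝓝 t, ∀ᶠ s in F, ∀ w ∈ W, σ (s + w) = γ := by
  rw [SettlesAt, eventually_prod_iff]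
  constructor
  · rintro ⟨P, hP, Q, hQ, h⟩
    exact ⟨{w | Q w}, hQ, hP.mono fun s hs w hw => h hs hw⟩
  · rintro ⟨W, hW, h⟩
    exact ⟨_, h, (· ∈ W), hW, fun hs w hw => hs w hw⟩

theorem SettlesAt.eventually_nhds (h : SettlesAt F σ t γ) : ∀ᶠ u in 𝓝 t, SettlesAt F σ u γ := by
  obtain ⟨W, hW, hconst⟩ := settlesAt_iff_exists_nhds.1 h
  filter_upwards [eventually_mem_nhds_iff.2 hW] with u hu
  exact settlesAt_iff_exists_nhds.2 ⟨W, hu, hconst⟩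

theorem SettlesAt.eventually_eventually_nhds (h : SettlesAt F σ t γ) :
    ∀ᶠ p in F ×ˢ 𝓝 t, ∀ᶠ v in 𝓝 (p.1 + p.2), σ v = γ := by
  obtain ⟨W, hW, hconst⟩ := settlesAt_iff_exists_nhds.1 h
  filter_upwards [hconst.prod_mk (eventually_mem_nhds_iff.2 hW)] with ⟨s, u⟩ ⟨hs, hu⟩
  have hshift : Tendsto (· - s) (𝓝 (s + u)) (𝓝 u) := by
    simpa using (continuous_sub_right s).tendsto (s + u)
  filter_upwards [hshift hu] with v hv
  simpa using hs (v - s) hv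

theorem SettlesAt.eventually_eq (h : SettlesAt F σ t γ) : ∀ᶠ s in F, σ (s + t) = γ :=
  h.curry.mono fun _ => Eventually.self_of_nhds

theorem SettlesAt.unique [F.NeBot] (h : SettlesAt F σ t γ) (h' : SettlesAt F σ t γ') : γ = γ' := by
  obtain ⟨s, hs, hs'⟩ := (h.eventually_eq.and h'.eventually_eq).exists
  exact hs.symm.trans hs'

theorem SettlesAt.map_add_right {r : ℝ} (h : SettlesAt F σ (t + r) γ) :
    SettlesAt (F.map (· + r)) σ t γ := by
  obtain ⟨W, hW, hconst⟩ := settlesAt_iff_exists_nhds.1 h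
  refine settlesAt_iff_exists_nhds.2
    ⟨(· + r) ⁻¹' W, (continuous_add_const r).continuousAt.preimage_mem_nhds hW, ?_⟩
  rw [eventually_map]
  filter_upwards [hconst] with s hs w hw
  rw [add_assoc, add_comm r]
  exact hs (w + r) hw

theorem exists_settlesAt_of_notMem_unsettledTimes (ht : t ∉ UnsettledTimes F σ) :
    ∃ γ, SettlesAt F σ t γ := by
  simpa [UnsettledTimes] using ht

theorem exists_forall_settlesAt_of_isPreconnected [F.NeBot] {I : Set ℝ} (hI : IsPreconnected I)
    (hne : I.Nonempty) (hdisj : Disjoint I (UnsettledTimes F σ)) :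
    ∃ γ, ∀ u ∈ I, SettlesAt F σ u γ := by
  have hsettled : ∀ u ∈ I, ∃ γ, SettlesAt F σ u γ := fun u hu =>
    exists_settlesAt_of_notMem_unsettledTimes (hdisj.notMem_of_mem_left hu)
  obtain ⟨u₀, hu₀⟩ := hne
  obtain ⟨γ, hγ⟩ := hsettled u₀ hu₀
  refine ⟨γ, fun u hu => (hI.induction₂
    (fun v w => ∀ γ, SettlesAt F σ v γ ↔ SettlesAt F σ w γ) ?_ ?_ ?_ hu₀ hu γ).1 hγ⟩
  · intro v hv
    obtain ⟨β, hβ⟩ := hsettled v hv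
    filter_upwards [nhdsWithin_le_nhds hβ.eventually_nhds] with w hw γ
    exact ⟨fun h => hβ.unique h ▸ hw, fun h => hw.unique h ▸ hβ⟩
  · exact fun _ _ _ _ _ _ h h' γ => (h γ).trans (h' γ)
  · exact fun _ _ _ _ h γ => (h γ).symm

theorem IsLimitSignal.eq_of_settlesAt [F.NeBot] (hρ : IsLimitSignal F σ ρ)
    (h : SettlesAt F σ t γ) : ρ t = γ := by
  obtain ⟨u, hu, hu'⟩ := ((hρ t).and (nhdsWithin_le_nhds h.eventually_nhds)).exists
  exact hu.unique hu'

theorem IsLimitSignal.rightLocConst [F.NeBot] (hρ : IsLimitSignal F σ ρ) : RightLocConst ρ := by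
  intro t
  obtain ⟨c, hc, hsettled⟩ := mem_nhdsGT_iff_exists_Ioo_subset.1 (hρ t)
  refine ⟨c - t, sub_pos.2 hc, fun u htu hu => ?_⟩
  rcases htu.eq_or_lt with rfl | htu
  · rfl
  · exact hρ.eq_of_settlesAt (hsettled ⟨htu, by linarith⟩)

theorem IsLimitSignal.switchTimes_subset [F.NeBot] (hρ : IsLimitSignal F σ ρ) :
    SwitchTimes ρ ⊆ UnsettledTimes F σ := by
  intro t ht γ hγ
  obtain ⟨ε, hε, hsettled⟩ := Metric.eventually_nhds_iff_ball.1 hγ.eventually_nhds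
  obtain ⟨u, hu, hut, hne⟩ := ht.2 ε hε
  have hu_ball : u ∈ ball t ε := by
    rw [Real.ball_eq_Ioo]
    exact ⟨hu, by linarith⟩
  exact hne ((hρ.eq_of_settlesAt (hsettled u hu_ball)).trans (hρ.eq_of_settlesAt hγ).symm)

theorem IsLimitSignal.countable_unsettledTimes (hρ : IsLimitSignal F σ ρ) :
    (UnsettledTimes F σ).Countable :=
  countable_of_eventually_nhdsGT_notMem fun t _ => (hρ t).mono fun _ hu hunsettled =>
    hunsettled _ hu

theorem IsLimitSignal.map_add_right (hρ : IsLimitSignal F σ ρ) (r : ℝ) :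
    IsLimitSignal (F.map (· + r)) σ (fun t => ρ (t + r)) := by
  intro t
  have hshift : Tendsto (· + r) (𝓝[>] t) (𝓝[>] (t + r)) :=
    tendsto_nhdsWithin_of_tendsto_nhds_of_eventually_within _
      ((continuous_add_const r).continuousAt.mono_left nhdsWithin_le_nhds)
      (eventually_nhdsWithin_of_forall fun _ hu => add_lt_add_left hu r)
  exact (hshift.eventually (hρ (t + r))).mono fun _ hu => hu.map_add_right

variable [Finite Γ] {U : Ultrafilter ℝ} {τD : ℝ} {N₀ : ℕ}

theorem eventually_exists_mem_switchTimes_of_mem_unsettledTimes (hU : ↑U ≤ (atTop : Filter ℝ))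
    (hσ : RightLocConst σ) (ht : t ∈ UnsettledTimes U σ) {W : Set ℝ} (hW : W ∈ 𝓝 t) :
    ∀ᶠ s in (U : Filter ℝ), ∃ w ∈ W, s + w ∈ SwitchTimes σ := by
  by_contra hno
  rw [← Ultrafilter.eventually_not] at hno
  obtain ⟨γ, hγ⟩ := (U.map fun s => σ (s + t)).eq_pure_of_finite
  have hval : ∀ᶠ s in (U : Filter ℝ), σ (s + t) = γ := by
    have : ({γ} : Set Γ) ∈ U.map fun s => σ (s + t) := hγ ▸ rfl
    exact this
  obtain ⟨δ, hδ, hball⟩ := Metric.mem_nhds_iff.1 hW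
  refine ht γ (settlesAt_iff_exists_nhds.2 ⟨ball t δ, ball_mem_nhds t hδ, ?_⟩)
  filter_upwards [hno, hval, hU (eventually_ge_atTop (δ - t))] with s hs hst hsδ w hw
  rw [← hst]
  refine hσ.eq_of_disjoint_switchTimes (I := ball (s + t) δ) (convex_ball _ _).isPreconnected
    ?_ (disjoint_left.2 fun v hv hswitch => hs ⟨v - s, hball ?_, by simpa using hswitch⟩)
    (by simpa using hw) (mem_ball_self hδ)
  · intro v hv
    rw [Real.ball_eq_Ioo] at hv
    exact mem_Ioi.2 (by linarith [hv.1])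
  · rw [mem_ball, Real.dist_eq] at hv ⊢
    rwa [sub_sub]

theorem finite_unsettledTimes_inter_Ioo_and_ncard_le (hU : ↑U ≤ (atTop : Filter ℝ)) (hτ : 0 < τD)
    (hσ : IsSwitchingSignal σ τD N₀) (hab : a < b) :
    (UnsettledTimes U σ ∩ Ioo a b).Finite ∧
      ((UnsettledTimes U σ ∩ Ioo a b).ncard : ℝ) ≤ N₀ + (b - a) / τD :=
  finite_and_ncard_le_of_forall_finset fun _ hT =>
    hσ.card_le_of_eventually_exists hτ hU hab (hT.trans inter_subset_right) fun _ ht _ hW =>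
      eventually_exists_mem_switchTimes_of_mem_unsettledTimes hU hσ.1 (hT ht).1 hW

theorem exists_isLimitSignal (hU : ↑U ≤ (atTop : Filter ℝ)) (hτ : 0 < τD)
    (hσ : IsSwitchingSignal σ τD N₀) : ∃ ρ, IsLimitSignal U σ ρ := by
  suffices ∀ t, ∃ γ, ∀ᶠ u in 𝓝[>] t, SettlesAt U σ u γ from Classical.skolem.1 this
  intro t
  have hfin := (finite_unsettledTimes_inter_Ioo_and_ncard_le hU hτ hσ (lt_add_one t)).1
  have hgap : (UnsettledTimes U σ ∩ Ioo t (t + 1))ᶜ ∈ 𝓝[>] t := nhdsWithin_le_nhds <|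
    hfin.isClosed.isOpen_compl.mem_nhds fun h => lt_irrefl t h.2.1
  obtain ⟨c, hc, hsub⟩ := mem_nhdsGT_iff_exists_Ioo_subset.1
    (inter_mem hgap (Ioo_mem_nhdsGT (lt_add_one t)))
  obtain ⟨γ, hγ⟩ := exists_forall_settlesAt_of_isPreconnected (F := U) (σ := σ)
    isPreconnected_Ioo (nonempty_Ioo.2 hc)
    (disjoint_left.2 fun u hu hunsettled => (hsub hu).1 ⟨hunsettled, (hsub hu).2⟩)
  exact ⟨γ, mem_of_superset (Ioo_mem_nhdsGT hc) hγ⟩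

theorem IsLimitSignal.isSwitchingSignal (hU : ↑U ≤ (atTop : Filter ℝ)) (hτ : 0 < τD)
    (hσ : IsSwitchingSignal σ τD N₀) (hρ : IsLimitSignal U σ ρ) : IsSwitchingSignal ρ τD N₀ := by
  refine ⟨hρ.rightLocConst, fun a b _ hab => ?_⟩
  obtain ⟨hfin, hcard⟩ := finite_unsettledTimes_inter_Ioo_and_ncard_le hU hτ hσ hab
  rw [Nat.card_coe_set_eq]
  refine le_trans (Nat.cast_le.2 ?_) hcard
  exact ncard_le_ncard (inter_subset_inter_left _ hρ.switchTimes_subset) hfin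

end LimitSignals

section LimitCurves

variable {E : Type*} {x y : ℝ → E} {F : Filter ℝ} {K : Set E} {t : ℝ}

theorem tendsto_add_const_atTop (hF : F ≤ atTop) (t : ℝ) : Tendsto (· + t) F atTop :=
  tendsto_atTop_add_const_right F t (tendsto_id'.2 hF)

theorem tendsto_add_prod_nhds_atTop (hF : F ≤ atTop) (t : ℝ) :
    Tendsto (fun p : ℝ × ℝ => p.1 + p.2) (F ×ˢ 𝓝 t) atTop :=
  (tendsto_fst.mono_right hF).atTop_add tendsto_snd

/-- `y` is the limit along `F` of the translates `x (s + ·)`, in the sense of continuous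
convergence: `x (s + u) → y t` as `s → ∞` along `F` and `u → t` jointly. -/
def IsLimitCurve [TopologicalSpace E] (F : Filter ℝ) (x y : ℝ → E) : Prop :=
  ∀ t, Tendsto (fun p : ℝ × ℝ => x (p.1 + p.2)) (F ×ˢ 𝓝 t) (𝓝 (y t))

section Topological

variable [TopologicalSpace E]

theorem IsLimitCurve.tendsto (hy : IsLimitCurve F x y) (t : ℝ) :
    Tendsto (fun s => x (s + t)) F (𝓝 (y t)) :=
  (hy t).comp (tendsto_id.prodMk (tendsto_const_pure.mono_right (pure_le_nhds t)))

theorem IsLimitCurve.continuous [RegularSpace E] [F.NeBot] (hy : IsLimitCurve F x y) :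
    Continuous y := by
  refine continuous_iff_continuousAt.2 fun t => (closed_nhds_basis (y t)).tendsto_right_iff.2 ?_
  rintro W ⟨hW, hWclosed⟩
  have hclose : ∀ᶠ u in 𝓝 t, ∀ᶠ s in F, x (s + u) ∈ W :=
    (eventually_swap_iff.1 ((hy t).eventually hW)).curry
  exact hclose.mono fun u hu => hWclosed.mem_of_tendsto (hy.tendsto u) hu

theorem IsLimitCurve.mem [F.NeBot] (hy : IsLimitCurve F x y) (hF : F ≤ atTop) (hK : IsClosed K)
    (hxK : ∀ t, 0 ≤ t → x t ∈ K) (t : ℝ) : y t ∈ K :=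
  hK.mem_of_tendsto (hy.tendsto t) <|
    ((tendsto_add_const_atTop hF t).eventually_ge_atTop 0).mono fun _ => hxK _

theorem IsLimitCurve.map_add_right (hy : IsLimitCurve F x y) (r : ℝ) :
    IsLimitCurve (F.map (· + r)) x (fun t => y (t + r)) := by
  intro t
  have hshift : Tendsto (· + r) (𝓝 t) (𝓝 (t + r)) := (continuous_add_const r).continuousAt
  rw [← map_id (f := 𝓝 t), prod_map_map_eq, tendsto_map'_iff]
  refine ((hy (t + r)).comp (tendsto_id.prodMap hshift)).congr fun p => ?_
  simp only [Function.comp_apply, Prod.map_fst, Prod.map_snd, id_eq]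
  congr 1
  ring

end Topological

theorem exists_isLimitCurve [UniformSpace E] {U : Ultrafilter ℝ} (hU : ↑U ≤ (atTop : Filter ℝ))
    (hK : IsCompact K) (hxK : ∀ t, 0 ≤ t → x t ∈ K) (hx : UniformContinuousOn x (Ici 0)) :
    ∃ y, IsLimitCurve U x y := by
  have hpointwise : ∀ t, ∃ ξ, Tendsto (fun s => x (s + t)) U (𝓝 ξ) := fun t => by
    obtain ⟨ξ, -, hξ⟩ := hK.ultrafilter_le_nhds' (U.map fun s => x (s + t)) <|
      ((tendsto_add_const_atTop hU t).eventually_ge_atTop 0).mono fun _ => hxK _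
    exact ⟨ξ, hξ⟩
  choose y hy using hpointwise
  refine ⟨y, fun t => ((hy t).comp tendsto_fst).congr_uniformity ?_⟩
  have hclose : Tendsto (fun p : ℝ × ℝ => (p.1 + t, p.1 + p.2)) (↑U ×ˢ 𝓝 t) (𝓤 ℝ) := by
    rw [tendsto_uniformity_iff_dist_tendsto_zero]
    simpa only [dist_add_left, dist_self] using
      (tendsto_const_nhds (x := t)).dist (tendsto_snd (f := (U : Filter ℝ)) (g := 𝓝 t))
  have hnonneg : ∀ᶠ p in (U : Filter ℝ) ×ˢ 𝓝 t, (p.1 + t, p.1 + p.2) ∈ Ici (0 : ℝ) ×ˢ Ici 0 :=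
    (((tendsto_add_const_atTop hU t).comp tendsto_fst).eventually_ge_atTop 0).and
      ((tendsto_add_prod_nhds_atTop hU t).eventually_ge_atTop 0)
  exact Tendsto.comp hx (tendsto_inf.2 ⟨hclose, tendsto_principal.2 hnonneg⟩)

theorem IsLimitCurve.hasDerivAt [NormedAddCommGroup E] [NormedSpace ℝ E] [F.NeBot] {g : E → E}
    (hy : IsLimitCurve F x y) (hF : F ≤ atTop) (hK : IsClosed K) (hg : ContinuousOn g K)
    (hxK : ∀ t, 0 ≤ t → x t ∈ K)
    (hx : ∀ᶠ p in F ×ˢ 𝓝 t, HasDerivAt x (g (x (p.1 + p.2))) (p.1 + p.2)) :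
    HasDerivAt y (g (y t)) t := by
  have hyK : ∀ u, y u ∈ K := hy.mem hF hK hxK
  refine hasDerivAt_of_tendstoUniformlyOnFilter (l := F) (f := fun s u => x (s + u))
    (f' := fun s u => g (x (s + u))) (g' := fun u => g (y u)) ?_
    (hx.mono fun p hp => hp.comp_const_add p.1 p.2) (.of_forall hy.tendsto)
  rw [tendstoUniformlyOnFilter_iff_tendsto]
  have hmem : ∀ᶠ p in F ×ˢ 𝓝 t, x (p.1 + p.2) ∈ K :=
    ((tendsto_add_prod_nhds_atTop hF t).eventually_ge_atTop 0).mono fun _ => hxK _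
  have hlim : Tendsto (fun p : ℝ × ℝ => g (y p.2)) (F ×ˢ 𝓝 t) (𝓝 (g (y t))) :=
    (hg.comp_continuous hy.continuous hyK).continuousAt.tendsto.comp tendsto_snd
  have happrox : Tendsto (fun p : ℝ × ℝ => g (x (p.1 + p.2))) (F ×ˢ 𝓝 t) (𝓝 (g (y t))) :=
    (hg _ (hyK t)).tendsto.comp (tendsto_nhdsWithin_iff.2 ⟨hy t, hmem⟩)
  exact (hlim.prodMk_nhds happrox).mono_right (nhds_le_uniformity _)

end LimitCurves

section Velocity

variable {X Γ E : Type*} [TopologicalSpace X] {f : X → Γ → E} {K : Set X} {x : ℝ → X}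
  {σ : ℝ → Γ} {a b t : ℝ}

theorem continuousAt_comp_of_eventually_eq [TopologicalSpace E]
    (hf : ∀ γ, ContinuousOn (f · γ) K) (hx : ContinuousOn x (Ici 0)) (hxK : ∀ t, 0 ≤ t → x t ∈ K)
    (ht : 0 < t) (hσ : ∀ᶠ u in 𝓝 t, σ u = σ t) : ContinuousAt (fun s => f (x s) (σ s)) t := by
  have hfrozen : ContinuousAt (fun s => f (x s) (σ t)) t :=
    ((hf (σ t)).comp hx hxK).continuousAt (Ici_mem_nhds ht)
  exact hfrozen.congr (hσ.mono fun u hu => congrArg (f (x u)) hu.symm)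

theorem RightLocConst.aestronglyMeasurable_comp [TopologicalSpace E]
    [TopologicalSpace.PseudoMetrizableSpace E] (hσ : RightLocConst σ)
    (hf : ∀ γ, ContinuousOn (f · γ) K) (hx : ContinuousOn x (Ici 0))
    (hxK : ∀ t, 0 ≤ t → x t ∈ K) :
    AEStronglyMeasurable (fun s => f (x s) (σ s)) (volume.restrict (Ioi 0)) := by
  have hcount := hσ.countable_switchTimes
  rw [← Measure.restrict_congr_set (sdiff_null_ae_eq_self (hcount.measure_zero volume))]
  refine ContinuousOn.aestronglyMeasurable (fun t ht => ContinuousAt.continuousWithinAt ?_)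
    (measurableSet_Ioi.diff hcount.measurableSet)
  exact continuousAt_comp_of_eventually_eq hf hx hxK ht.1 (hσ.eventually_eq ht.1 ht.2)

theorem RightLocConst.intervalIntegrable_comp [Finite Γ] [NormedAddCommGroup E]
    (hσ : RightLocConst σ) (hK : IsCompact K) (hf : ∀ γ, ContinuousOn (f · γ) K)
    (hx : ContinuousOn x (Ici 0)) (hxK : ∀ t, 0 ≤ t → x t ∈ K) (ha : 0 ≤ a) (hb : 0 ≤ b) :
    IntervalIntegrable (fun s => f (x s) (σ s)) volume a b := by
  obtain ⟨C, hC⟩ := exists_forall_norm_le_of_continuousOn hK hf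
  have hpos : Ι a b ⊆ Ioi 0 := fun s hs => (le_min ha hb).trans_lt hs.1
  refine (intervalIntegrable_const (c := C)).mono_fun'
    ((hσ.aestronglyMeasurable_comp hf hx hxK).mono_set hpos) ?_
  exact ae_restrict_of_forall_mem measurableSet_uIoc fun s hs => hC _ (hxK s (hpos hs).le) _

end Velocity

section Trajectories

variable {n m : ℕ} {f : EuclideanSpace ℝ (Fin n) → Fin m → EuclideanSpace ℝ (Fin n)}
  {K : Set (EuclideanSpace ℝ (Fin n))} {x y : ℝ → EuclideanSpace ℝ (Fin n)} {σ ρ : ℝ → Fin m}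
  {F : Filter ℝ} {a b t : ℝ} {γ : Fin m}

theorem IsTrajectory.sub_eq_integral (h : IsTrajectory f x σ) (hσ : RightLocConst σ)
    (hK : IsCompact K) (hf : ∀ γ, ContinuousOn (f · γ) K) (hxK : ∀ t, 0 ≤ t → x t ∈ K)
    (ha : 0 ≤ a) (hb : 0 ≤ b) : x b - x a = ∫ s in a..b, f (x s) (σ s) := by
  rw [h.2 a ha, h.2 b hb, add_sub_add_left_eq_sub]
  exact intervalIntegral.integral_interval_sub_left
    (hσ.intervalIntegrable_comp hK hf h.1 hxK le_rfl hb)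
    (hσ.intervalIntegrable_comp hK hf h.1 hxK le_rfl ha)

theorem IsTrajectory.uniformContinuousOn (h : IsTrajectory f x σ) (hσ : RightLocConst σ)
    (hK : IsCompact K) (hf : ∀ γ, ContinuousOn (f · γ) K) (hxK : ∀ t, 0 ≤ t → x t ∈ K) :
    UniformContinuousOn x (Ici 0) := by
  obtain ⟨C, hC⟩ := exists_forall_norm_le_of_continuousOn hK hf
  refine (LipschitzOnWith.of_dist_le' (K := C) fun a ha b hb => ?_).uniformContinuousOn
  rw [dist_eq_norm, Real.dist_eq, h.sub_eq_integral hσ hK hf hxK hb ha]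
  exact intervalIntegral.norm_integral_le_of_norm_le_const fun s hs =>
    hC _ (hxK s ((le_min hb ha).trans hs.1.le)) _

theorem IsTrajectory.hasDerivAt (h : IsTrajectory f x σ) (hσ : RightLocConst σ)
    (hK : IsCompact K) (hf : ∀ γ, ContinuousOn (f · γ) K) (hxK : ∀ t, 0 ≤ t → x t ∈ K)
    (ht : 0 < t) (hγ : ∀ᶠ u in 𝓝 t, σ u = γ) : HasDerivAt x (f (x t) γ) t := by
  obtain rfl : σ t = γ := hγ.self_of_nhds
  have hderiv := intervalIntegral.integral_hasDerivAt_right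
    (hσ.intervalIntegrable_comp hK hf h.1 hxK le_rfl ht.le)
    (AEStronglyMeasurable.stronglyMeasurableAtFilter_of_mem
      (hσ.aestronglyMeasurable_comp hf h.1 hxK) (Ioi_mem_nhds ht))
    (continuousAt_comp_of_eventually_eq hf h.1 hxK ht hγ)
  exact (hderiv.const_add (x 0)).congr_of_eventuallyEq
    ((eventually_ge_nhds ht).mono h.2)

theorem IsTrajectory.of_isLimitCurve [F.NeBot] (hF : F ≤ atTop) (h : IsTrajectory f x σ)
    (hσ : RightLocConst σ) (hK : IsCompact K) (hf : ∀ γ, ContinuousOn (f · γ) K)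
    (hxK : ∀ t, 0 ≤ t → x t ∈ K) (hy : IsLimitCurve F x y) (hρ : IsLimitSignal F σ ρ) :
    IsTrajectory f y ρ := by
  have hyK : ∀ t, 0 ≤ t → y t ∈ K := fun t _ => hy.mem hF hK.isClosed hxK t
  have hderiv : ∀ t ∉ UnsettledTimes F σ, HasDerivAt y (f (y t) (ρ t)) t := by
    intro t ht
    obtain ⟨γ, hγ⟩ := exists_settlesAt_of_notMem_unsettledTimes ht
    rw [hρ.eq_of_settlesAt hγ]
    refine hy.hasDerivAt hF hK.isClosed (hf γ) hxK ?_
    filter_upwards [hγ.eventually_eventually_nhds,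
      (tendsto_add_prod_nhds_atTop hF t).eventually_gt_atTop 0] with p hp hpos
    exact h.hasDerivAt hσ hK hf hxK hpos hp
  refine ⟨hy.continuous.continuousOn, fun t ht => ?_⟩
  rw [integral_eq_of_hasDerivAt_off_countable_of_le y _ ht hρ.countable_unsettledTimes
    hy.continuous.continuousOn (fun s hs => hderiv s hs.2)
    (hρ.rightLocConst.intervalIntegrable_comp hK hf hy.continuous.continuousOn hyK le_rfl ht),
    add_sub_cancel]

end Trajectories

section OmegaLimitPoints

theorem exists_ultrafilter_of_mapClusterPt_prodMk {ι X Γ : Type*} [TopologicalSpace X]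
    [TopologicalSpace Γ] [DiscreteTopology Γ] {F : Filter ι} {x : ι → X} {σ : ι → Γ} {ξ : X} {γ : Γ}
    (h : MapClusterPt (ξ, γ) F fun s => (x s, σ s)) :
    ∃ U : Ultrafilter ι, ↑U ≤ F ∧ Tendsto x U (𝓝 ξ) ∧ ∀ᶠ s in (U : Filter ι), σ s = γ := by
  obtain ⟨U, hUF, hU⟩ := mapClusterPt_iff_ultrafilter.1 h
  rw [nhds_prod_eq, tendsto_prod_iff', nhds_discrete Γ, tendsto_pure] at hU
  exact ⟨U, hUF, hU⟩

theorem mapClusterPt_of_isLimitCurve_of_isLimitSignal {X Γ : Type*} [TopologicalSpace X]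
    [TopologicalSpace Γ] [DiscreteTopology Γ] {F : Filter ℝ} [F.NeBot] (hF : F ≤ atTop)
    {x y : ℝ → X} {σ ρ : ℝ → Γ} (hy : IsLimitCurve F x y) (hρ : IsLimitSignal F σ ρ) (t : ℝ) :
    MapClusterPt (y t, ρ t) atTop fun s => (x s, σ s) := by
  rw [mapClusterPt_iff_frequently]
  intro W hW
  rw [nhds_prod_eq, nhds_discrete Γ, prod_pure, mem_map] at hW
  have hx : ∀ᶠ u in 𝓝[>] t, ∀ᶠ s in F, (x (s + u), ρ t) ∈ W :=
    nhdsWithin_le_nhds (eventually_swap_iff.1 ((hy t).eventually hW)).curry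
  obtain ⟨u, hxu, hσu⟩ := (hx.and (hρ t)).exists
  refine (tendsto_add_const_atTop hF u).frequently (Eventually.frequently ?_)
  filter_upwards [hxu, hσu.eventually_eq] with s hxs hσs
  rwa [hσs]

variable {n m : ℕ} {f : EuclideanSpace ℝ (Fin n) → Fin m → EuclideanSpace ℝ (Fin n)}
  {χ : Fin m → Set (EuclideanSpace ℝ (Fin n))} {Ω K : Set (EuclideanSpace ℝ (Fin n))}
  {V : EuclideanSpace ℝ (Fin n) → Fin m → ℝ} {x y : ℝ → EuclideanSpace ℝ (Fin n)}
  {σ ρ : ℝ → Fin m} {F : Filter ℝ} {ξ ξ' : EuclideanSpace ℝ (Fin n)} {γ : Fin m}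

theorem InTchi.mem_of_mapClusterPt (h : InTchi χ x σ) (hχ : ∀ γ, IsClosed (χ γ))
    (hξ : MapClusterPt (ξ, γ) atTop fun s => (x s, σ s)) : ξ ∈ χ γ := by
  obtain ⟨U, hU, hxU, hσU⟩ := exists_ultrafilter_of_mapClusterPt_prodMk hξ
  refine (hχ γ).mem_of_tendsto hxU ?_
  filter_upwards [hσU, hU (eventually_ge_atTop 0)] with s hs hs0
  exact hs ▸ h s hs0

theorem InTV.le_of_mapClusterPt (h : InTV Ω V x σ) (hK : IsClosed K)
    (hV : ContinuousOn (V · γ) K) (hxK : ∀ t, 0 ≤ t → x t ∈ K)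
    (hξ : MapClusterPt (ξ, γ) atTop fun s => (x s, σ s))
    (hξ' : MapClusterPt (ξ', γ) atTop fun s => (x s, σ s)) : V ξ γ ≤ V ξ' γ := by
  have hlim : ∀ U : Ultrafilter ℝ, ↑U ≤ (atTop : Filter ℝ) → ∀ ζ, Tendsto x U (𝓝 ζ) →
      Tendsto (fun s => V (x s) γ) U (𝓝 (V ζ γ)) := by
    intro U hU ζ hζ
    have hmem : ∀ᶠ s in (U : Filter ℝ), x s ∈ K :=
      ((eventually_ge_atTop 0).filter_mono hU).mono hxK
    exact (hV ζ (hK.mem_of_tendsto hζ hmem)).tendsto.comp (tendsto_nhdsWithin_iff.2 ⟨hζ, hmem⟩)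
  obtain ⟨U, hU, hxU, hσU⟩ := exists_ultrafilter_of_mapClusterPt_prodMk hξ
  obtain ⟨U', hU', hxU', hσU'⟩ := exists_ultrafilter_of_mapClusterPt_prodMk hξ'
  refine ge_of_tendsto (hlim U' hU' ξ' hxU') ?_
  filter_upwards [hσU', hU' (eventually_ge_atTop 0)] with t ht ht0
  refine le_of_tendsto (hlim U hU ξ hxU) ?_
  filter_upwards [hσU, hU (eventually_ge_atTop t)] with s hs hts
  simpa only [ht, hs] using h.2 t s ht0 hts (ht.trans hs.symm)

theorem InTV.inTVstar_of_isLimitCurve [F.NeBot] (hF : F ≤ atTop) (h : InTV Ω V x σ)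
    (hK : IsClosed K) (hKΩ : K ⊆ Ω) (hV : ∀ γ, ContinuousOn (V · γ) K)
    (hxK : ∀ t, 0 ≤ t → x t ∈ K) (hy : IsLimitCurve F x y) (hρ : IsLimitSignal F σ ρ) :
    InTVstar Ω V y ρ := by
  have hle : ∀ t t', ρ t = ρ t' → V (y t) (ρ t) ≤ V (y t') (ρ t') := by
    intro t t' hρt
    have hcluster := mapClusterPt_of_isLimitCurve_of_isLimitSignal hF hy hρ t
    rw [hρt] at hcluster ⊢
    exact h.le_of_mapClusterPt hK (hV _) hxK hcluster
      (mapClusterPt_of_isLimitCurve_of_isLimitSignal hF hy hρ t')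
  exact ⟨⟨fun t _ => hKΩ (hy.mem hF hK hxK t), fun t t' _ _ hρt => hle t' t hρt.symm⟩,
    fun t t' _ _ hρt => (hle t t' hρt).antisymm (hle t' t hρt.symm)⟩

end OmegaLimitPoints

section InvariancePrinciple

variable {n m : ℕ} {f : EuclideanSpace ℝ (Fin n) → Fin m → EuclideanSpace ℝ (Fin n)}
  {χ : Fin m → Set (EuclideanSpace ℝ (Fin n))} {Ω K : Set (EuclideanSpace ℝ (Fin n))}
  {V : EuclideanSpace ℝ (Fin n) → Fin m → ℝ} {x : ℝ → EuclideanSpace ℝ (Fin n)}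
  {σ : ℝ → Fin m} {τD : ℝ} {N₀ : ℕ}

/-- The family `𝒯_V* ∩ 𝒯[χ] ∩ 𝒯_a[τD, N₀]` of trajectories. -/
def constantLevelTrajectories
    (f : EuclideanSpace ℝ (Fin n) → Fin m → EuclideanSpace ℝ (Fin n))
    (χ : Fin m → Set (EuclideanSpace ℝ (Fin n))) (Ω : Set (EuclideanSpace ℝ (Fin n)))
    (V : EuclideanSpace ℝ (Fin n) → Fin m → ℝ) (τD : ℝ) (N₀ : ℕ) :
    Set ((ℝ → EuclideanSpace ℝ (Fin n)) × (ℝ → Fin m)) :=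
  {q | IsTrajectory f q.1 q.2 ∧ IsSwitchingSignal q.2 τD N₀ ∧
    InTchi χ q.1 q.2 ∧ InTVstar Ω V q.1 q.2}

/-- The largest subset of `S` that is weakly invariant with respect to the family `C`: the union
of all such subsets. -/
def largestWeaklyInvariant (C : Set ((ℝ → EuclideanSpace ℝ (Fin n)) × (ℝ → Fin m)))
    (S : Set (EuclideanSpace ℝ (Fin n) × Fin m)) : Set (EuclideanSpace ℝ (Fin n) × Fin m) :=
  ⋃₀ {M | M ⊆ S ∧ WeaklyInvariant C M}

theorem WeaklyInvariant.subset_largestWeaklyInvariant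
    {C : Set ((ℝ → EuclideanSpace ℝ (Fin n)) × (ℝ → Fin m))}
    {M S : Set (EuclideanSpace ℝ (Fin n) × Fin m)} (hM : WeaklyInvariant C M) (hMS : M ⊆ S) :
    M ⊆ largestWeaklyInvariant C S :=
  subset_sUnion_of_mem (show M ∈ {M | M ⊆ S ∧ WeaklyInvariant C M} from ⟨hMS, hM⟩)

/-- The initial points of all limits of translates of `(x, σ)` along ultrafilters tending to `∞`.
Ultrafilters spare the passage to subsequences, and translating one translates its limits. -/
def translateLimitPoints (x : ℝ → EuclideanSpace ℝ (Fin n)) (σ : ℝ → Fin m) :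
    Set (EuclideanSpace ℝ (Fin n) × Fin m) :=
  {p | ∃ U : Ultrafilter ℝ, ↑U ≤ (atTop : Filter ℝ) ∧ ∃ y ρ,
    IsLimitCurve U x y ∧ IsLimitSignal U σ ρ ∧ (y 0, ρ 0) = p}

theorem weaklyInvariant_translateLimitPoints (hK : IsCompact K) (hKΩ : K ⊆ Ω)
    (hf : ∀ γ, ContinuousOn (f · γ) K) (hV : ∀ γ, ContinuousOn (V · γ) K)
    (hχ : ∀ γ, IsClosed (χ γ)) (hτ : 0 < τD) (htraj : IsTrajectory f x σ)
    (hσ : IsSwitchingSignal σ τD N₀) (hchi : InTchi χ x σ) (hTV : InTV Ω V x σ)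
    (hxK : ∀ t, 0 ≤ t → x t ∈ K) :
    WeaklyInvariant (constantLevelTrajectories f χ Ω V τD N₀) (translateLimitPoints x σ) := by
  rintro _ ⟨U, hU, y, ρ, hy, hρ, rfl⟩
  refine ⟨(y, ρ), ⟨?_, ?_, fun t _ => ?_, ?_⟩, rfl, rfl, fun t _ => ?_⟩
  · exact htraj.of_isLimitCurve hU hσ.1 hK hf hxK hy hρ
  · exact hρ.isSwitchingSignal hU hτ hσ
  · exact hchi.mem_of_mapClusterPt hχ (mapClusterPt_of_isLimitCurve_of_isLimitSignal hU hy hρ t)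
  · exact hTV.inTVstar_of_isLimitCurve hU hK.isClosed hKΩ hV hxK hy hρ
  · exact ⟨U.map (· + t), tendsto_add_const_atTop hU t, _, _, hy.map_add_right t,
      hρ.map_add_right t, by simp only [zero_add]⟩

theorem translateLimitPoints_subset (hK : IsClosed K) (hxK : ∀ t, 0 ≤ t → x t ∈ K) :
    translateLimitPoints x σ ⊆ K ×ˢ univ := by
  rintro _ ⟨U, hU, y, ρ, hy, -, rfl⟩
  exact ⟨hy.mem hU hK hxK 0, mem_univ _⟩

theorem tendsto_infDist_translateLimitPoints (hK : IsCompact K)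
    (hxK : ∀ t, 0 ≤ t → x t ∈ K) (hx : UniformContinuousOn x (Ici 0)) (hτ : 0 < τD)
    (hσ : IsSwitchingSignal σ τD N₀) {M : Set (EuclideanSpace ℝ (Fin n) × Fin m)}
    (hM : translateLimitPoints x σ ⊆ M) :
    Tendsto (fun t => infDist (x t) (Prod.fst '' M)) atTop (𝓝 0) := by
  rw [tendsto_iff_ultrafilter]
  intro U hU
  obtain ⟨y, hy⟩ := exists_isLimitCurve hU hK hxK hx
  obtain ⟨ρ, hρ⟩ := exists_isLimitSignal hU hτ hσ
  have hmem : y 0 ∈ Prod.fst '' M := ⟨_, hM ⟨U, hU, y, ρ, hy, hρ, rfl⟩, rfl⟩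
  have hx0 : Tendsto x U (𝓝 (y 0)) := by simpa only [add_zero] using hy.tendsto 0
  rw [← infDist_zero_of_mem hmem]
  exact (continuous_infDist_pt _).continuousAt.tendsto.comp hx0

end InvariancePrinciple

theorem stmt12_general {n m : ℕ}
    {f : EuclideanSpace ℝ (Fin n) → Fin m → EuclideanSpace ℝ (Fin n)}
    {χ : Fin m → Set (EuclideanSpace ℝ (Fin n))} (hχ : ∀ γ, IsClosed (χ γ))
    {Ω B : Set (EuclideanSpace ℝ (Fin n))} (hB : IsCompact B) (hBΩ : B ⊆ Ω)
    (hf : ∀ γ, ContinuousOn (f · γ) B)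
    {V : EuclideanSpace ℝ (Fin n) → Fin m → ℝ} (hV : ∀ γ, ContinuousOn (V · γ) B)
    {τD : ℝ} (hτ : 0 < τD) {N₀ : ℕ} {x : ℝ → EuclideanSpace ℝ (Fin n)} {σ : ℝ → Fin m}
    (htraj : IsTrajectory f x σ) (hσ : IsSwitchingSignal σ τD N₀)
    (hchi : InTchi χ x σ) (hTV : InTV Ω V x σ) (hxB : ∀ t, 0 ≤ t → x t ∈ B) :
    Tendsto (fun t => infDist (x t) (Prod.fst ''
      largestWeaklyInvariant (constantLevelTrajectories f χ Ω V τD N₀) (Ω ×ˢ univ)))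
      atTop (𝓝 0) :=
  tendsto_infDist_translateLimitPoints hB hxB (htraj.uniformContinuousOn hσ.1 hB hf hxB) hτ hσ <|
    (weaklyInvariant_translateLimitPoints hB hBΩ hf hV hχ hτ htraj hσ hchi hTV
      hxB).subset_largestWeaklyInvariant
        ((translateLimitPoints_subset hB.isClosed hxB).trans (prod_mono_left hBΩ))

/-- LaSalle invariance principle for switched systems: let `χ` be a closed
covering of `ℝⁿ`, `Ω ⊆ ℝⁿ` open, `V : Ω × Γ → ℝ` continuous, and let
`(x,σ) ∈ 𝒯_V ∩ 𝒯[χ] ∩ 𝒯_a[τD,N₀]` evolve in a compact `B ⊂ Ω`. If `M` is the largest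
weakly-invariant set w.r.t. `𝒯_V^* ∩ 𝒯[χ] ∩ 𝒯_a[τD,N₀]` contained in `Ω × Γ`, then
`x(t)` converges to `π₁(M)` as `t → ∞`. -/
theorem stmt12 {n m : ℕ}
    (f : EuclideanSpace ℝ (Fin n) → Fin m → EuclideanSpace ℝ (Fin n))
    (hf : ∀ γ : Fin m, Continuous (fun ξ => f ξ γ))
    (χ : Fin m → Set (EuclideanSpace ℝ (Fin n)))
    (hχcl : ∀ γ, IsClosed (χ γ)) (hχcov : (⋃ γ, χ γ) = Set.univ)
    (Ω : Set (EuclideanSpace ℝ (Fin n))) (hΩ : IsOpen Ω)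
    (V : EuclideanSpace ℝ (Fin n) → Fin m → ℝ)
    (hV : ∀ γ : Fin m, ContinuousOn (fun ξ => V ξ γ) Ω)
    (τD : ℝ) (hτ : 0 < τD) (N₀ : ℕ)
    (x : ℝ → EuclideanSpace ℝ (Fin n)) (σ : ℝ → Fin m)
    (htraj : IsTrajectory f x σ) (hsig : IsSwitchingSignal σ τD N₀)
    (hchi : InTchi χ x σ) (hTV : InTV Ω V x σ)
    (B : Set (EuclideanSpace ℝ (Fin n))) (hB : IsCompact B) (hBΩ : B ⊆ Ω)
    (hxB : ∀ t : ℝ, 0 ≤ t → x t ∈ B)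
    (M : Set (EuclideanSpace ℝ (Fin n) × Fin m))
    (hMsub : M ⊆ Ω ×ˢ (Set.univ : Set (Fin m)))
    (hMinv : WeaklyInvariant
      {q | IsTrajectory f q.1 q.2 ∧ IsSwitchingSignal q.2 τD N₀ ∧
        InTchi χ q.1 q.2 ∧ InTVstar Ω V q.1 q.2} M)
    (hMmax : ∀ M' : Set (EuclideanSpace ℝ (Fin n) × Fin m),
      M' ⊆ Ω ×ˢ (Set.univ : Set (Fin m)) →
      WeaklyInvariant
        {q | IsTrajectory f q.1 q.2 ∧ IsSwitchingSignal q.2 τD N₀ ∧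
          InTchi χ q.1 q.2 ∧ InTVstar Ω V q.1 q.2} M' → M' ⊆ M) :
    Tendsto (fun t => infDist (x t) (Prod.fst '' M)) atTop (nhds 0) := by
  have hM : M = largestWeaklyInvariant (constantLevelTrajectories f χ Ω V τD N₀) (Ω ×ˢ univ) :=
    (hMinv.subset_largestWeaklyInvariant hMsub).antisymm
      (sUnion_subset fun M' hM' => hMmax M' hM'.1 hM'.2)
  rw [hM]
  exact stmt12_general hχcl hB hBΩ (fun γ => (hf γ).continuousOn) (fun γ => (hV γ).mono hBΩ) hτ
    htraj hsig hchi hTV hxB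
end

section
/- Asymptotic stability criterion (main theorem): suppose V is a weak Lyapunov-like function for 𝒯′ (with Ω = ℝⁿ) and that M = {0} × Γ* is the maximal weakly-invariant set with respect to 𝒯_V* ∩ 𝒯[χ] ∩ 𝒯_a, where Γ* = {γ ∈ Γ : 0 ∈ χ_γ} and f(0,γ) = 0 for all γ ∈ Γ*. Then 𝒯′ is globally asymptotically stable: uniformly stable and every x(t) with (x,σ) ∈ 𝒯′ converges to 0 as t → ∞. -/
open Filter Set MeasureTheory Metric

/-- A class-`𝒦_∞` function (modeled on `[0,∞)`): continuous, strictly increasing on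
`[0,∞)`, vanishing at `0`, unbounded. -/
def IsKinf (α : ℝ → ℝ) : Prop :=
  Continuous α ∧ StrictMonoOn α (Set.Ici 0) ∧ α 0 = 0 ∧
    Filter.Tendsto α Filter.atTop Filter.atTop

/-- `V` is a weak Lyapunov-like function for the family `T'` of trajectories:
(1) `V` is `C¹` in the state and sandwiched between two `𝒦_∞` functions of the norm
on each `χ_γ`; (2) its derivative along the `γ`-th vector field is `≤ 0` on `χ_γ`;
(3) for every trajectory of `T'` and switching times `s < s'` of its signal (with
`s` a switching time or `0`) carrying the same index, `V` at `s'` is at most `V`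
evaluated at the switching time `s''` immediately following `s` (with index `σ s`). -/
def IsWeakLyap {n m : ℕ}
    (f : EuclideanSpace ℝ (Fin n) → Fin m → EuclideanSpace ℝ (Fin n))
    (χ : Fin m → Set (EuclideanSpace ℝ (Fin n)))
    (T' : Set ((ℝ → EuclideanSpace ℝ (Fin n)) × (ℝ → Fin m)))
    (V : EuclideanSpace ℝ (Fin n) → Fin m → ℝ) : Prop :=
  (∀ γ : Fin m, ContDiff ℝ 1 (fun ξ => V ξ γ)) ∧
  (∃ α₁ α₂ : ℝ → ℝ, IsKinf α₁ ∧ IsKinf α₂ ∧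
    ∀ ξ, ∀ γ : Fin m, ξ ∈ χ γ → α₁ ‖ξ‖ ≤ V ξ γ ∧ V ξ γ ≤ α₂ ‖ξ‖) ∧
  (∀ ξ, ∀ γ : Fin m, ξ ∈ χ γ → fderiv ℝ (fun ζ => V ζ γ) ξ (f ξ γ) ≤ 0) ∧
  (∀ p ∈ T', ∀ s s'' s' : ℝ,
    s ∈ insert (0:ℝ) (SwitchTimes p.2) → s'' ∈ SwitchTimes p.2 →
    s' ∈ SwitchTimes p.2 → s < s'' →
    (∀ u ∈ Set.Ioo s s'', u ∉ SwitchTimes p.2) →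
    s < s' → p.2 s = p.2 s' →
    V (p.1 s') (p.2 s') ≤ V (p.1 s'') (p.2 s))
/-!
Along a trajectory of `T'`, `V` does not increase between visits to the same mode. Comparing `V`
with the norm through `α₁` and `α₂`, a return at `t` to the mode of `s` gives `‖x t‖ ≤ β ‖x s‖` with
`β = α₁⁻¹ ∘ α₂`. As there are only `m` modes, `‖x t‖ ≤ β^[m] ‖x t₀‖` for all `t ≥ t₀`.

For convergence, the time shifts of a bounded trajectory are equi-Lipschitz and share a dwell-time,
so along an ultrafilter tending to infinity they converge to a trajectory of `𝒯[χ] ∩ 𝒯_a`, which can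
be made to start at any given limit point `ξ`. As `V` is monotone along the visits to each mode, it
is constant along those of the limit, whose orbit is therefore weakly invariant, so `ξ = 0`.
-/

open scoped Topology NNReal

section Signals

variable {Γ : Type*} {σ : ℝ → Γ} {τD : ℝ} {N₀ : ℕ}

theorem rightLocConst_iff_eventually :
    RightLocConst σ ↔ ∀ t, ∀ᶠ u in 𝓝[>] t, σ u = σ t := by
  refine forall_congr' fun t => ?_
  rw [Filter.Eventually, mem_nhdsGT_iff_exists_Ioo_subset]
  constructor
  · rintro ⟨ε, hε, h⟩
    exact ⟨t + ε, lt_add_of_pos_right t hε, fun u hu => h u hu.1.le hu.2⟩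
  · rintro ⟨b, hb, h⟩
    refine ⟨b - t, sub_pos.2 hb, fun u htu hub => ?_⟩
    rcases htu.eq_or_lt with rfl | htu
    · rfl
    · exact h ⟨htu, by linarith⟩

theorem mem_switchTimes_iff_frequently {s : ℝ} :
    s ∈ SwitchTimes σ ↔ 0 < s ∧ ∃ᶠ u in 𝓝[<] s, σ u ≠ σ s := by
  rw [(nhdsLT_basis s).frequently_iff]
  refine and_congr_right fun _ => ⟨fun h a ha => ?_, fun h ε hε => ?_⟩
  · obtain ⟨u, hau, hus, hne⟩ := h (s - a) (sub_pos.2 ha)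
    exact ⟨u, ⟨by linarith, hus⟩, hne⟩
  · obtain ⟨u, hu, hne⟩ := h _ (sub_lt_self s hε)
    exact ⟨u, hu.1, hu.2, hne⟩

namespace RightLocConst

theorem eventually_eq_nhdsGE (hσ : RightLocConst σ) (t : ℝ) : ∀ᶠ u in 𝓝[≥] t, σ u = σ t := by
  rw [← Ioi_insert, nhdsWithin_insert, eventually_sup]
  exact ⟨rfl, rightLocConst_iff_eventually.1 hσ t⟩

theorem measurable [MeasurableSpace Γ] (hσ : RightLocConst σ) : Measurable σ := fun s _ =>
  .of_mem_nhdsGT fun t ht => (rightLocConst_iff_eventually.1 hσ t).mono fun u hu =>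
    show σ u ∈ s from hu ▸ ht

theorem eventually_notMem_switchTimes (hσ : RightLocConst σ) (t : ℝ) :
    ∀ᶠ u in 𝓝[>] t, u ∉ SwitchTimes σ := by
  obtain ⟨b, hb, h⟩ := mem_nhdsGT_iff_exists_Ioo_subset.1 (rightLocConst_iff_eventually.1 hσ t)
  filter_upwards [Ioo_mem_nhdsGT hb] with u hu hswitch
  refine (mem_switchTimes_iff_frequently.1 hswitch).2 ?_
  filter_upwards [Ioo_mem_nhdsLT hu.1] with v hv
  exact not_not.2 ((h ⟨hv.1, hv.2.trans hu.2⟩).trans (h hu).symm)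

theorem eventually_eq_nhds (hσ : RightLocConst σ) {t : ℝ} (ht : 0 < t)
    (hswitch : t ∉ SwitchTimes σ) : ∀ᶠ u in 𝓝 t, σ u = σ t := by
  have hleft : ∀ᶠ u in 𝓝[<] t, σ u = σ t := by
    simpa [mem_switchTimes_iff_frequently, ht] using hswitch
  rw [← nhdsLT_sup_nhdsGE, eventually_sup]
  exact ⟨hleft, hσ.eventually_eq_nhdsGE t⟩

theorem eq_of_forall_notMem_switchTimes (hσ : RightLocConst σ) {a b : ℝ} (ha : 0 ≤ a)
    (hab : a ≤ b) (h : ∀ u ∈ Ioc a b, u ∉ SwitchTimes σ) : σ a = σ b := by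
  let _ : TopologicalSpace Γ := ⊥
  have _ : DiscreteTopology Γ := ⟨rfl⟩
  refine isPreconnected_Icc.constant (fun u hu => ?_) (left_mem_Icc.2 hab) (right_mem_Icc.2 hab)
  rw [ContinuousWithinAt, nhds_discrete, tendsto_pure]
  rcases hu.1.eq_or_lt with rfl | hau
  · exact (hσ.eventually_eq_nhdsGE a).filter_mono (nhdsWithin_mono _ Icc_subset_Ici_self)
  · exact (hσ.eventually_eq_nhds (ha.trans_lt hau) (h u ⟨hau, hu.2⟩)).filter_mono
      nhdsWithin_le_nhds

theorem exists_first_time (hσ : RightLocConst σ) {a t : ℝ} (hat : a ≤ t) :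
    ∃ s ∈ Icc a t, σ s = σ t ∧ ∀ u ∈ Ico a s, σ u ≠ σ t := by
  set S : Set ℝ := {u | a ≤ u ∧ σ u = σ t}
  have hne : S.Nonempty := ⟨t, hat, rfl⟩
  have hbdd : BddBelow S := ⟨a, fun u hu => hu.1⟩
  have has : a ≤ sInf S := le_csInf hne fun u hu => hu.1
  have hmem : σ (sInf S) = σ t := by
    obtain ⟨b, hb, h⟩ := mem_nhdsGE_iff_exists_Ico_subset.1 (hσ.eventually_eq_nhdsGE (sInf S))
    obtain ⟨u, hu, hub⟩ := exists_lt_of_csInf_lt hne hb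
    exact (h ⟨csInf_le hbdd hu, hub⟩ : σ u = _).symm.trans hu.2
  exact ⟨sInf S, ⟨has, csInf_le hbdd ⟨hat, rfl⟩⟩, hmem,
    fun u hu hut => notMem_of_lt_csInf hu.2 hbdd ⟨hu.1, hut⟩⟩

end RightLocConst

theorem HasADT.ncard_le (h : HasADT σ τD N₀) {a b : ℝ} (ha : 0 ≤ a) (hab : a < b) :
    ((SwitchTimes σ ∩ Ioo a b).ncard : ℝ) ≤ N₀ + (b - a) / τD := by
  simpa only [Nat.card_coe_set_eq] using h a b ha hab

-- Finiteness on the smaller intervals has to be assumed: `HasADT` counts an infinite set as empty.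
theorem HasADT.finite_inter_Ioo (hτ : 0 < τD) (h : HasADT σ τD N₀) {s : ℝ}
    (hfin : ∀ t < s, (SwitchTimes σ ∩ Ioc 0 t).Finite) : (SwitchTimes σ ∩ Ioo 0 s).Finite := by
  by_contra hinf
  obtain ⟨k, hk⟩ := exists_nat_gt ((N₀ : ℝ) + s / τD)
  obtain ⟨F, hF, hcard⟩ := Set.Infinite.exists_subset_card_eq hinf k
  have hs' : 0 < s := by
    obtain ⟨w, -, hw⟩ := Set.Infinite.nonempty hinf
    exact hw.1.trans hw.2
  have hlate : ∀ᶠ t in 𝓝[<] s, ∀ w ∈ F, w < t :=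
    (Finset.eventually_all F).2 fun w hw => eventually_nhdsWithin_of_eventually_nhds
      (eventually_gt_nhds (hF hw).2.2)
  obtain ⟨t, hFt, ht⟩ := (hlate.and (Ioo_mem_nhdsLT hs')).exists
  have hFsub : (F : Set ℝ) ⊆ SwitchTimes σ ∩ Ioo 0 t :=
    fun w hw => ⟨(hF hw).1, (hF hw).2.1, hFt w hw⟩
  have hkt : k ≤ (SwitchTimes σ ∩ Ioo 0 t).ncard := by
    rw [← hcard, ← Set.ncard_coe_finset]
    exact Set.ncard_le_ncard hFsub
      ((hfin t ht.2).subset (inter_subset_inter_right _ Ioo_subset_Ioc_self))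
  have : (k : ℝ) ≤ N₀ + s / τD := calc
    (k : ℝ) ≤ (SwitchTimes σ ∩ Ioo 0 t).ncard := mod_cast hkt
    _ ≤ N₀ + (t - 0) / τD := h.ncard_le le_rfl ht.1
    _ ≤ N₀ + s / τD := by gcongr; linarith [ht.2]
  linarith

namespace IsSwitchingSignal

theorem finite_switchTimes (hτ : 0 < τD) (h : IsSwitchingSignal σ τD N₀) (t : ℝ) :
    (SwitchTimes σ ∩ Ioc 0 t).Finite := by
  by_contra ht
  set A : Set ℝ := {t | (SwitchTimes σ ∩ Ioc 0 t).Infinite}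
  have hne : A.Nonempty := ⟨t, ht⟩
  have hbdd : BddBelow A := ⟨0, fun u hu =>
    let ⟨_, _, hw⟩ := Set.Infinite.nonempty hu
    (hw.1.trans_le hw.2).le⟩
  have hfin : (SwitchTimes σ ∩ Ioo 0 (sInf A)).Finite :=
    h.2.finite_inter_Ioo hτ fun t ht => not_not.1 fun h' => notMem_of_lt_csInf ht hbdd h'
  obtain ⟨b, hb, hclear⟩ :=
    mem_nhdsGT_iff_exists_Ioo_subset.1 (h.1.eventually_notMem_switchTimes (sInf A))
  obtain ⟨u, hu, hub⟩ := exists_lt_of_csInf_lt hne hb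
  refine hu ((hfin.insert (sInf A)).subset fun w hw => ?_)
  rcases lt_trichotomy w (sInf A) with hlt | heq | hgt
  · exact Or.inr ⟨hw.1, hw.2.1, hlt⟩
  · exact Or.inl heq
  · exact absurd hw.1 (hclear ⟨hgt, hw.2.2.trans_lt hub⟩)

theorem exists_last_switchTime (hτ : 0 < τD) (h : IsSwitchingSignal σ τD N₀) {t : ℝ}
    (ht : 0 ≤ t) :
    ∃ s ∈ insert 0 (SwitchTimes σ), s ∈ Icc 0 t ∧ ∀ u ∈ Ioc s t, u ∉ SwitchTimes σ := by
  obtain ⟨s, hs, hmax⟩ := Set.exists_max_image _ id ((h.finite_switchTimes hτ t).insert 0)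
    (insert_nonempty _ _)
  have hs0 : 0 ≤ s := hmax 0 (mem_insert _ _)
  refine ⟨s, hs.imp id And.left, ⟨hs0, ?_⟩, fun u hu hswitch => ?_⟩
  · rcases hs with rfl | hs
    exacts [ht, hs.2.2]
  · exact (hmax u (.inr ⟨hswitch, hs0.trans_lt hu.1, hu.2⟩)).not_gt hu.1

theorem exists_next_switchTime (hτ : 0 < τD) (h : IsSwitchingSignal σ τD N₀) {s t u : ℝ}
    (hs : 0 ≤ s) (hu : u ∈ SwitchTimes σ) (hut : u ∈ Ioc s t) :
    ∃ v ∈ SwitchTimes σ, v ∈ Ioc s t ∧ ∀ w ∈ Ioo s v, w ∉ SwitchTimes σ := by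
  have hfin : (SwitchTimes σ ∩ Ioc s t).Finite :=
    (h.finite_switchTimes hτ t).subset (inter_subset_inter_right _ (Ioc_subset_Ioc_left hs))
  obtain ⟨v, hv, hmin⟩ := Set.exists_min_image _ id hfin ⟨u, hu, hut⟩
  exact ⟨v, hv.1, hv.2, fun w hw hswitch =>
    (hmin w ⟨hswitch, hw.1, hw.2.le.trans hv.2.2⟩).not_gt hw.2⟩

end IsSwitchingSignal

end Signals

section SwitchCounters

variable {Γ : Type*} {σ : ℝ → Γ} {τD : ℝ} {N₀ : ℕ} {N : ℝ → ℕ}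

/-- `N` jumps whenever `σ` switches on `[0,∞)`, and grows no faster than average dwell-time `τD`
and chatter bound `N₀` allow. It may also jump elsewhere; unlike `HasADT`, this notion passes to
pointwise limits of `σ` and `N`. -/
structure IsSwitchCounter (σ : ℝ → Γ) (τD : ℝ) (N₀ : ℕ) (N : ℝ → ℕ) : Prop where
  monotoneOn : MonotoneOn N (Ici 0)
  eq_of_eq : ∀ {a b : ℝ}, 0 ≤ a → 0 ≤ b → N a = N b → σ a = σ b
  le_add : ∀ {a b : ℝ}, 0 ≤ a → a ≤ b → (N b : ℝ) ≤ N a + (N₀ + (b - a) / τD)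

namespace IsSwitchCounter

theorem eq_on_Icc (h : IsSwitchCounter σ τD N₀ N) {a b : ℝ} (ha : 0 ≤ a) (hN : N a = N b) :
    ∀ u ∈ Icc a b, σ u = σ a := fun u hu =>
  have hu0 : 0 ≤ u := ha.trans hu.1
  h.eq_of_eq hu0 ha <| le_antisymm ((h.monotoneOn hu0 (hu0.trans hu.2) hu.2).trans hN.ge)
    (h.monotoneOn ha hu0 hu.1)

theorem lt_of_mem_switchTimes (h : IsSwitchCounter σ τD N₀ N) {a s : ℝ} (ha : 0 ≤ a)
    (has : a < s) (hs : s ∈ SwitchTimes σ) : N a < N s := by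
  obtain ⟨v, hv, hav, hvs⟩ :=
    ((mem_switchTimes_iff_frequently.1 hs).2.and_eventually (Ioo_mem_nhdsLT has)).exists
  have hv0 : 0 ≤ v := ha.trans hav.le
  calc N a ≤ N v := h.monotoneOn ha hv0 hav.le
    _ < N s := lt_of_le_of_ne (h.monotoneOn hv0 (hv0.trans hvs.le) hvs.le)
      fun hN => hv (h.eq_of_eq hv0 (hv0.trans hvs.le) hN)

theorem hasADT (h : IsSwitchCounter σ τD N₀ N) : HasADT σ τD N₀ := by
  intro a b ha hab
  have hinj : InjOn N (SwitchTimes σ ∩ Ioo a b) := StrictMonoOn.injOn fun u hu v hv huv =>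
    h.lt_of_mem_switchTimes (ha.trans hu.2.1.le) huv hv.1
  have hmaps : ∀ u ∈ SwitchTimes σ ∩ Ioo a b, N u ∈ Ioc (N a) (N b) := fun u hu =>
    ⟨h.lt_of_mem_switchTimes ha hu.2.1 hu.1,
      h.monotoneOn (ha.trans hu.2.1.le) (ha.trans hab.le) hu.2.2.le⟩
  have hcard : (SwitchTimes σ ∩ Ioo a b).ncard ≤ N b - N a := by
    simpa [← Finset.coe_Ioc, Set.ncard_coe_finset] using
      Set.ncard_le_ncard_of_injOn N hmaps hinj (finite_Ioc _ _)
  have hNab : N a ≤ N b := h.monotoneOn ha (ha.trans hab.le) hab.le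
  rw [Nat.card_coe_set_eq]
  calc ((SwitchTimes σ ∩ Ioo a b).ncard : ℝ) ≤ (N b - N a : ℕ) := mod_cast hcard
    _ = N b - N a := Nat.cast_sub hNab
    _ ≤ N₀ + (b - a) / τD := by linarith [h.le_add ha hab.le]

theorem comp_const_add (h : IsSwitchCounter σ τD N₀ N) {c : ℝ} (hc : 0 ≤ c) :
    IsSwitchCounter (fun t => σ (c + t)) τD N₀ fun t => N (c + t) where
  monotoneOn _ ha _ hb hab :=
    h.monotoneOn (add_nonneg hc ha) (add_nonneg hc hb) (add_le_add_right hab c)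
  eq_of_eq ha hb := h.eq_of_eq (add_nonneg hc ha) (add_nonneg hc hb)
  le_add ha hab := by
    simpa only [add_sub_add_left_eq_sub] using
      h.le_add (add_nonneg hc ha) (add_le_add_right hab c)

theorem of_eventually_eq {ι : Type*} {l : Filter ι} [l.NeBot] {σs : ι → ℝ → Γ} {Ns : ι → ℝ → ℕ}
    (h : ∀ᶠ i in l, IsSwitchCounter (σs i) τD N₀ (Ns i))
    (hσ : ∀ t, 0 ≤ t → ∀ᶠ i in l, σs i t = σ t) (hN : ∀ t, 0 ≤ t → ∀ᶠ i in l, Ns i t = N t) :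
    IsSwitchCounter σ τD N₀ N where
  monotoneOn a ha b hb hab := by
    obtain ⟨i, hi, hNa, hNb⟩ := (h.and ((hN a ha).and (hN b hb))).exists
    rw [← hNa, ← hNb]
    exact hi.monotoneOn ha hb hab
  eq_of_eq {a b} ha hb hab := by
    obtain ⟨i, ⟨hi, hNa, hNb⟩, hσa, hσb⟩ :=
      ((h.and ((hN a ha).and (hN b hb))).and ((hσ a ha).and (hσ b hb))).exists
    rw [← hσa, ← hσb]
    exact hi.eq_of_eq ha hb (by rw [hNa, hNb, hab])
  le_add {a b} ha hab := by
    obtain ⟨i, hi, hNa, hNb⟩ := (h.and ((hN a ha).and (hN b (ha.trans hab)))).exists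
    rw [← hNa, ← hNb]
    exact hi.le_add ha hab

end IsSwitchCounter

/-- The number of switching times of `σ` in `(0, t]`. -/
noncomputable def switchCount (σ : ℝ → Γ) (t : ℝ) : ℕ := (SwitchTimes σ ∩ Ioc 0 t).ncard

theorem switchCount_zero (σ : ℝ → Γ) : switchCount σ 0 = 0 := by simp [switchCount]

namespace IsSwitchingSignal

theorem switchCount_add_ncard (hτ : 0 < τD) (h : IsSwitchingSignal σ τD N₀) {a b : ℝ}
    (ha : 0 ≤ a) (hab : a ≤ b) :
    switchCount σ a + (SwitchTimes σ ∩ Ioc a b).ncard = switchCount σ b := by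
  rw [switchCount, switchCount, ← Ioc_union_Ioc_eq_Ioc ha hab, inter_union_distrib_left]
  refine (Set.ncard_union_eq ?_ (h.finite_switchTimes hτ a) ?_).symm
  · exact (Ioc_disjoint_Ioc_of_le le_rfl).mono inter_subset_right inter_subset_right
  · exact (h.finite_switchTimes hτ b).subset (inter_subset_inter_right _ (Ioc_subset_Ioc_left ha))

theorem ncard_inter_Ioc_le (hτ : 0 < τD) (h : IsSwitchingSignal σ τD N₀) {a b : ℝ} (ha : 0 ≤ a)
    (hab : a ≤ b) : ((SwitchTimes σ ∩ Ioc a b).ncard : ℝ) ≤ N₀ + (b - a) / τD := by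
  refine le_of_forall_pos_le_add fun ε hε => ?_
  have hb : b < b + ε * τD := lt_add_of_pos_right b (by positivity)
  have hsub : SwitchTimes σ ∩ Ioc a b ⊆ SwitchTimes σ ∩ Ioo a (b + ε * τD) :=
    inter_subset_inter_right _ fun u hu => ⟨hu.1, hu.2.trans_lt hb⟩
  have hfin : (SwitchTimes σ ∩ Ioo a (b + ε * τD)).Finite :=
    (h.finite_switchTimes hτ (b + ε * τD)).subset
      (inter_subset_inter_right _ fun u hu => ⟨ha.trans_lt hu.1, hu.2.le⟩)
  calc ((SwitchTimes σ ∩ Ioc a b).ncard : ℝ)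
      ≤ (SwitchTimes σ ∩ Ioo a (b + ε * τD)).ncard := mod_cast Set.ncard_le_ncard hsub hfin
    _ ≤ N₀ + (b + ε * τD - a) / τD := h.2.ncard_le ha (hab.trans_lt hb)
    _ = N₀ + (b - a) / τD + ε := by field_simp; ring

theorem isSwitchCounter_switchCount (hτ : 0 < τD) (h : IsSwitchingSignal σ τD N₀) :
    IsSwitchCounter σ τD N₀ (switchCount σ) where
  monotoneOn a ha b _ hab := by
    rw [← h.switchCount_add_ncard hτ ha hab]
    exact Nat.le_add_right _ _
  eq_of_eq {a b} ha hb hN := by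
    wlog hab : a ≤ b generalizing a b
    · exact (this hb ha hN.symm (le_of_not_ge hab)).symm
    have hnone : SwitchTimes σ ∩ Ioc a b = ∅ := by
      refine (Set.ncard_eq_zero ((h.finite_switchTimes hτ b).subset
        (inter_subset_inter_right _ (Ioc_subset_Ioc_left ha)))).1 ?_
      linarith [h.switchCount_add_ncard hτ ha hab]
    exact h.1.eq_of_forall_notMem_switchTimes ha hab fun u hu hswitch =>
      notMem_empty u (hnone ▸ ⟨hswitch, hu⟩)
  le_add {a b} ha hab := by
    rw [← h.switchCount_add_ncard hτ ha hab, Nat.cast_add]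
    gcongr
    exact h.ncard_inter_Ioc_le hτ ha hab

theorem comp_const_add (hτ : 0 < τD) (h : IsSwitchingSignal σ τD N₀) {c : ℝ} (hc : 0 ≤ c) :
    IsSwitchingSignal (fun t => σ (c + t)) τD N₀ := by
  refine ⟨rightLocConst_iff_eventually.2 fun t => ?_,
    ((h.isSwitchCounter_switchCount hτ).comp_const_add hc).hasADT⟩
  have hright := rightLocConst_iff_eventually.1 h.1 (c + t)
  rwa [← map_add_left_nhdsGT, eventually_map] at hright

end IsSwitchingSignal

theorem rightLocConst_of_eventually_eq {s : ℝ → Γ} (h : ∀ t, ∀ᶠ u in 𝓝[>] t, s u = σ t) :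
    RightLocConst σ := by
  refine rightLocConst_iff_eventually.2 fun t => ?_
  filter_upwards [eventually_eventually_nhdsWithin.2 (h t), self_mem_nhdsWithin] with u hu htu
  obtain ⟨v, hvt, hvu⟩ :=
    ((hu.filter_mono (nhdsWithin_mono u (Ioi_subset_Ioi (le_of_lt htu)))).and (h u)).exists
  exact hvu.symm.trans hvt

theorem IsSwitchCounter.exists_eventually_eq (h : IsSwitchCounter σ τD N₀ N) (t : ℝ) :
    ∃ n γ, ∀ᶠ u in 𝓝[>] t, N (max u 0) = n ∧ σ (max u 0) = γ := by
  have hmono : Monotone fun u => N (max u 0) := fun u v huv =>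
    h.monotoneOn (le_max_right u 0) (le_max_right v 0) (max_le_max_right 0 huv)
  have hn := hmono.tendsto_rightLim t
  rw [nhds_discrete, tendsto_pure] at hn
  obtain ⟨v, hv⟩ := hn.exists
  exact ⟨_, σ (max v 0), hn.mono fun u hu =>
    ⟨hu, h.eq_of_eq (le_max_right u 0) (le_max_right v 0) (hu.trans hv.symm)⟩⟩

-- The right-continuous modification of `σ` is the limit of its shifts by `δ → 0⁺`.
theorem IsSwitchCounter.exists_isSwitchingSignal (h : IsSwitchCounter σ τD N₀ N) :
    ∃ ς, IsSwitchingSignal ς τD N₀ ∧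
      ∀ t, 0 ≤ t → ∃ n, ∀ᶠ u in 𝓝[>] t, N u = n ∧ σ u = ς t := by
  choose P ς hright using h.exists_eventually_eq
  have hpos : ∀ t, 0 ≤ t → ∀ᶠ u in 𝓝[>] t, N u = P t ∧ σ u = ς t := fun t ht => by
    filter_upwards [hright t, self_mem_nhdsWithin] with u hu htu
    rwa [max_eq_left (ht.trans (le_of_lt htu))] at hu
  have hshift : ∀ t, 0 ≤ t → ∀ᶠ δ in 𝓝[>] (0 : ℝ), N (δ + t) = P t ∧ σ (δ + t) = ς t :=
    fun t ht => by
      have hδ := hpos t ht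
      rw [← zero_add t, ← map_add_right_nhdsGT, eventually_map, zero_add] at hδ
      exact hδ
  have hcounter : IsSwitchCounter ς τD N₀ P := .of_eventually_eq (l := 𝓝[>] 0)
    (eventually_mem_nhdsWithin.mono fun δ hδ => h.comp_const_add (le_of_lt hδ))
    (fun t ht => (hshift t ht).mono fun _ hδ => hδ.2)
    (fun t ht => (hshift t ht).mono fun _ hδ => hδ.1)
  exact ⟨ς, ⟨rightLocConst_of_eventually_eq fun t => (hright t).mono fun _ hu => hu.2,
    hcounter.hasADT⟩, fun t ht => ⟨P t, hpos t ht⟩⟩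

end SwitchCounters

section SignalConvergence

variable {Γ ι : Type*} {σ : ι → ℝ → Γ} {l : Filter ι} {ς : ℝ → Γ} {τD : ℝ} {N₀ : ℕ}

/-- Convergence of signals to a right-continuous one, away from the jumps: just after `t` the
signals eventually take the value `ς t`, uniformly on compact intervals, though not necessarily
at `t` itself, since switching times may accumulate at `t` from the right along `l`. -/
def TendstoSignal (σ : ι → ℝ → Γ) (l : Filter ι) (ς : ℝ → Γ) : Prop :=
  ∀ t, 0 ≤ t → ∀ᶠ b in 𝓝[>] t, ∀ a ∈ Ioo t b, ∀ᶠ k in l, ∀ u ∈ Icc a b, σ k u = ς t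

theorem TendstoSignal.eventually_eq (h : TendstoSignal σ l ς) {t : ℝ} (ht : 0 ≤ t) :
    ∀ᶠ u in 𝓝[>] t, ∀ᶠ k in l, σ k u = ς t := by
  obtain ⟨b, hb, htb⟩ := ((h t ht).and eventually_mem_nhdsWithin).exists
  filter_upwards [Ioo_mem_nhdsGT htb] with u hu
  exact (hb u hu).mono fun k hk => hk u (left_mem_Icc.2 hu.2.le)

theorem exists_tendstoSignal [Finite Γ] (U : Ultrafilter ι) (hτ : 0 < τD)
    (h : ∀ k, IsSwitchingSignal (σ k) τD N₀) :
    ∃ ς, IsSwitchingSignal ς τD N₀ ∧ TendstoSignal σ U ς := by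
  have hcounter := fun k => (h k).isSwitchCounter_switchCount hτ
  have hvalue : ∀ t, ∃ γ, ∀ᶠ k in U, σ k t = γ := fun t =>
    U.eventually_exists_iff.1 (.of_forall fun k => ⟨σ k t, rfl⟩)
  have hcount : ∀ t, 0 ≤ t → ∃ n, ∀ᶠ k in U, switchCount (σ k) t = n := fun t ht => by
    have hbound : ∀ k, switchCount (σ k) t ≤ ⌊(N₀ : ℝ) + (t - 0) / τD⌋₊ := fun k =>
      Nat.le_floor (by simpa [switchCount_zero] using (hcounter k).le_add le_rfl ht)
    obtain ⟨n, -, hn⟩ := (U.eventually_exists_mem_iff (P := fun n k => switchCount (σ k) t = n)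
      (finite_Iic _)).1 (.of_forall fun k => ⟨_, hbound k, rfl⟩)
    exact ⟨n, hn⟩
  choose s hs using hvalue
  choose! N hN using hcount
  obtain ⟨ς, hς, hright⟩ := (IsSwitchCounter.of_eventually_eq (l := (U : Filter ι))
    (.of_forall hcounter) (fun t _ => hs t) hN).exists_isSwitchingSignal
  refine ⟨ς, hς, fun t ht => ?_⟩
  obtain ⟨n, hn⟩ := hright t ht
  obtain ⟨b₀, hb₀, hconst⟩ := mem_nhdsGT_iff_exists_Ioo_subset.1 hn
  filter_upwards [Ioo_mem_nhdsGT hb₀] with b hb a ha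
  obtain ⟨hNa, hsa⟩ := hconst ⟨ha.1, ha.2.trans hb.2⟩
  have ha0 : 0 ≤ a := ht.trans ha.1.le
  filter_upwards [hN a ha0, hN b (ha0.trans ha.2.le), hs a] with k hka hkb hksa u hu
  have hNab : switchCount (σ k) a = switchCount (σ k) b := by
    rw [hka, hkb, hNa, (hconst hb).1]
  rw [(hcounter k).eq_on_Icc ha0 hNab u hu, hksa, hsa]

end SignalConvergence

section RightDerivatives

variable {E : Type*} [NormedAddCommGroup E] [NormedSpace ℝ E]

theorem norm_sub_sub_smul_le_of_hasDerivWithinAt_Ici {x x' : ℝ → E} {c : E} {a b ε : ℝ}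
    (hab : a ≤ b) (hx : ContinuousOn x (Icc a b))
    (hx' : ∀ s ∈ Ico a b, HasDerivWithinAt x (x' s) (Ici s) s)
    (h : ∀ s ∈ Ico a b, ‖x' s - c‖ ≤ ε) : ‖x b - x a - (b - a) • c‖ ≤ ε * (b - a) := by
  have hlin : ∀ s, HasDerivWithinAt (fun s : ℝ => s • c) c (Ici s) s := fun s => by
    simpa using (hasDerivWithinAt_id s (Ici s)).smul_const c
  have hle := norm_image_sub_le_of_norm_deriv_right_le_segment
    (hx.sub (f := x) (g := fun s => s • c) (by fun_prop)) (fun s hs => (hx' s hs).sub (hlin s)) h b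
    (right_mem_Icc.2 hab)
  simpa only [Pi.sub_apply, sub_sub_sub_comm, ← sub_smul] using hle

theorem hasDerivWithinAt_Ici_of_forall_Ioo {y : ℝ → E} {c : E} {t : ℝ}
    (hy : ContinuousWithinAt y (Ioi t) t)
    (h : ∀ ε > 0, ∀ᶠ b in 𝓝[>] t, ∀ a ∈ Ioo t b, ‖y b - y a - (b - a) • c‖ ≤ ε * (b - a)) :
    HasDerivWithinAt y c (Ici t) t := by
  rw [← hasDerivWithinAt_Ioi_iff_Ici, hasDerivWithinAt_iff_isLittleO, Asymptotics.isLittleO_iff]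
  intro ε hε
  filter_upwards [h ε hε, self_mem_nhdsWithin] with b hb htb
  have htb : t < b := htb
  have hid : Tendsto (fun a => b - a) (𝓝[>] t) (𝓝 (b - t)) :=
    (tendsto_id.mono_left nhdsWithin_le_nhds).const_sub b
  rw [Real.norm_of_nonneg (sub_nonneg.2 htb.le)]
  exact le_of_tendsto_of_tendsto ((hy.tendsto.const_sub (y b)).sub (hid.smul_const c)).norm
    (hid.const_mul ε) (mem_of_superset (Ioo_mem_nhdsGT htb) hb)

theorem hasDerivWithinAt_Ici_of_tendsto {ι : Type*} {l : Filter ι} [l.NeBot] {x x' : ι → ℝ → E}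
    {y : ℝ → E} {c : E} {t : ℝ} (hx : ∀ k, ContinuousOn (x k) (Ici t))
    (hx' : ∀ k, ∀ s ∈ Ici t, HasDerivWithinAt (x k) (x' k s) (Ici s) s)
    (hxy : ∀ s ∈ Ici t, Tendsto (fun k => x k s) l (𝓝 (y s))) (hy : ContinuousWithinAt y (Ioi t) t)
    (h : ∀ ε > 0, ∀ᶠ b in 𝓝[>] t, ∀ a ∈ Ioo t b, ∀ᶠ k in l, ∀ s ∈ Icc a b, ‖x' k s - c‖ ≤ ε) :
    HasDerivWithinAt y c (Ici t) t := by
  refine hasDerivWithinAt_Ici_of_forall_Ioo hy fun ε hε => (h ε hε).mono fun b hb a ha => ?_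
  have hta : ∀ s ∈ Icc a b, s ∈ Ici t := fun s hs => ha.1.le.trans hs.1
  refine le_of_tendsto (((hxy b (ha.1.trans ha.2).le).sub (hxy a ha.1.le)).sub_const _).norm
    ((hb a ha).mono fun k hk => ?_)
  exact norm_sub_sub_smul_le_of_hasDerivWithinAt_Ici ha.2.le ((hx k).mono hta)
    (fun s hs => hx' k s (hta s (Ico_subset_Icc_self hs))) fun s hs => hk s (Ico_subset_Icc_self hs)

end RightDerivatives

theorem RightLocConst.intervalIntegrable_comp_s16 {Γ X F : Type*} [Finite Γ] [TopologicalSpace X]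
    [NormedAddCommGroup F] {σ : ℝ → Γ} (hσ : RightLocConst σ) {g : X → Γ → F}
    (hg : ∀ γ, Continuous fun ξ => g ξ γ) {x : ℝ → X} {a b : ℝ} (hx : ContinuousOn x (uIcc a b)) :
    IntervalIntegrable (fun s => g (x s) (σ s)) volume a b := by
  let _ : MeasurableSpace Γ := ⊤
  have hpiece : ∀ γ, MeasurableSet (uIoc a b ∩ σ ⁻¹' {γ}) := fun γ =>
    measurableSet_uIoc.inter (hσ.measurable trivial)
  have hcover : uIoc a b = ⋃ γ, uIoc a b ∩ σ ⁻¹' {γ} := by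
    rw [← inter_iUnion, ← preimage_iUnion, iUnion_of_singleton, preimage_univ, inter_univ]
  rw [intervalIntegrable_iff, hcover, integrableOn_finite_iUnion]
  intro γ
  have hint : IntegrableOn (fun s => g (x s) γ) (uIoc a b) :=
    intervalIntegrable_iff.1 ((hg γ).comp_continuousOn hx).intervalIntegrable
  refine (hint.mono_set inter_subset_left).congr_fun (fun s hs => ?_) (hpiece γ)
  rw [show σ s = γ from hs.2]

section Trajectories

variable {n m : ℕ} {f : EuclideanSpace ℝ (Fin n) → Fin m → EuclideanSpace ℝ (Fin n)}
  {x : ℝ → EuclideanSpace ℝ (Fin n)} {σ : ℝ → Fin m}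

theorem isTrajectory_iff_hasDerivWithinAt (hf : ∀ γ, Continuous fun ξ => f ξ γ)
    (hσ : RightLocConst σ) :
    IsTrajectory f x σ ↔ ContinuousOn x (Ici 0) ∧
      ∀ t, 0 ≤ t → HasDerivWithinAt x (f (x t) (σ t)) (Ici t) t := by
  refine and_congr_right fun hx => ?_
  have hint : ∀ a b, 0 ≤ a → 0 ≤ b →
      IntervalIntegrable (fun s => f (x s) (σ s)) volume a b := fun a b ha hb =>
    hσ.intervalIntegrable_comp_s16 hf (hx.mono fun u hu => (le_min ha hb).trans hu.1)
  refine ⟨fun h t ht => ?_, fun h t ht => ?_⟩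
  · have hmeas : StronglyMeasurableAtFilter (fun s => f (x s) (σ s)) (𝓝[>] t) :=
      ⟨Ioc t (t + 1), Ioc_mem_nhdsGT (lt_add_one t),
        (hint t (t + 1) ht (by positivity)).1.aestronglyMeasurable⟩
    have hcont : ContinuousWithinAt (fun s => f (x s) (σ s)) (Ioi t) t :=
      ((hf (σ t)).continuousAt.comp_continuousWithinAt
        ((hx t ht).mono fun u hu => ht.trans (le_of_lt hu))).congr_of_eventuallyEq
        ((rightLocConst_iff_eventually.1 hσ t).mono fun u hu => congrArg (f (x u)) hu) rfl
    exact ((intervalIntegral.integral_hasDerivWithinAt_right (hint 0 t le_rfl ht) hmeas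
      hcont).const_add (x 0)).congr (fun u hu => h u (ht.trans hu)) (h t ht)
  · rw [intervalIntegral.integral_eq_sub_of_hasDeriv_right_of_le ht
      (hx.mono Icc_subset_Ici_self)
      (fun u hu => (h u hu.1.le).mono Ioi_subset_Ici_self) (hint 0 t le_rfl ht),
      add_sub_cancel]

namespace IsTrajectory

theorem comp_const_add (hf : ∀ γ, Continuous fun ξ => f ξ γ) (hσ : RightLocConst σ)
    (hx : IsTrajectory f x σ) {c : ℝ} (hc : 0 ≤ c) :
    IsTrajectory f (fun t => x (c + t)) fun t => σ (c + t) := by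
  have hint : ∀ t, 0 ≤ t → IntervalIntegrable (fun s => f (x s) (σ s)) volume 0 t := fun t ht =>
    hσ.intervalIntegrable_comp_s16 hf (hx.1.mono (by rw [uIcc_of_le ht]; exact Icc_subset_Ici_self))
  refine ⟨hx.1.comp (by fun_prop) fun t ht => add_nonneg hc ht, fun t ht => ?_⟩
  change x (c + t) = x (c + 0) + _
  rw [intervalIntegral.integral_comp_add_left (fun s => f (x s) (σ s)), add_zero,
    hx.2 (c + t) (add_nonneg hc ht), hx.2 c hc, add_assoc,
    intervalIntegral.integral_add_adjacent_intervals (hint c hc)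
      ((hint c hc).symm.trans (hint (c + t) (add_nonneg hc ht)))]

theorem lipschitzOnWith (hf : ∀ γ, Continuous fun ξ => f ξ γ) (hσ : RightLocConst σ)
    (hx : IsTrajectory f x σ) {L : ℝ≥0} (hL : ∀ t, 0 ≤ t → ‖f (x t) (σ t)‖ ≤ L) :
    LipschitzOnWith L x (Ici 0) := by
  obtain ⟨hcont, hderiv⟩ := (isTrajectory_iff_hasDerivWithinAt hf hσ).1 hx
  refine LipschitzOnWith.of_dist_le_mul fun a ha b hb => ?_
  wlog hab : b ≤ a generalizing a b
  · rw [dist_comm, dist_comm a]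
    exact this b hb a ha (le_of_not_ge hab)
  rw [dist_eq_norm, Real.dist_eq, abs_of_nonneg (sub_nonneg.2 hab)]
  exact norm_image_sub_le_of_norm_deriv_right_le_segment
    (hcont.mono fun u hu => le_trans hb hu.1) (fun u hu => hderiv u (le_trans hb hu.1))
    (fun u hu => hL u (le_trans hb hu.1)) a (right_mem_Icc.2 hab)

theorem comp_le (hf : ∀ γ, Continuous fun ξ => f ξ γ) (hσ : RightLocConst σ)
    (hx : IsTrajectory f x σ) {W : EuclideanSpace ℝ (Fin n) → ℝ} (hW : Differentiable ℝ W)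
    {a b : ℝ} (ha : 0 ≤ a) (hab : a ≤ b)
    (h : ∀ t ∈ Ico a b, fderiv ℝ W (x t) (f (x t) (σ t)) ≤ 0) : W (x b) ≤ W (x a) := by
  obtain ⟨hcont, hderiv⟩ := (isTrajectory_iff_hasDerivWithinAt hf hσ).1 hx
  exact image_le_of_deriv_right_le_deriv_boundary (f := W ∘ x) (B := fun _ => W (x a))
    (hW.continuous.comp_continuousOn (hcont.mono fun u hu => ha.trans hu.1))
    (fun t ht => (hW (x t)).hasFDerivAt.comp_hasDerivWithinAt t (hderiv t (ha.trans ht.1)))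
    le_rfl continuousOn_const (fun t _ => hasDerivWithinAt_const t (Ici t) (W (x a))) h
    (right_mem_Icc.2 hab)

end IsTrajectory

end Trajectories

theorem eventually_forall_Icc_mem_of_lipschitzOnWith {ι E : Type*} [PseudoMetricSpace E]
    {l : Filter ι} {x : ι → ℝ → E} {L : ℝ≥0} (hx : ∀ k, LipschitzOnWith L (x k) (Ici 0)) {t : ℝ}
    (ht : 0 ≤ t) {p : E} (hp : Tendsto (fun k => x k t) l (𝓝 p)) {s : Set E} (hs : s ∈ 𝓝 p) :
    ∀ᶠ b in 𝓝[>] t, ∀ᶠ k in l, ∀ u ∈ Icc t b, x k u ∈ s := by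
  obtain ⟨δ, hδ, hball⟩ := Metric.mem_nhds_iff.1 hs
  have hshort : ∀ᶠ b in 𝓝[>] t, L * (b - t) < δ / 2 := by
    have hlim : Tendsto (fun b => L * (b - t)) (𝓝[>] t) (𝓝 (L * (t - t))) :=
      ((tendsto_id.mono_left nhdsWithin_le_nhds).sub_const t).const_mul _
    exact hlim.eventually_lt_const (by simpa using hδ)
  filter_upwards [hshort] with b hb
  filter_upwards [hp (ball_mem_nhds p (half_pos hδ))] with k hk u hu
  refine hball (mem_ball.2 ?_)
  calc dist (x k u) p ≤ dist (x k u) (x k t) + dist (x k t) p := dist_triangle _ _ _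
    _ ≤ L * (b - t) + dist (x k t) p := by
      gcongr
      refine ((hx k).dist_le_mul u (ht.trans hu.1) t ht).trans ?_
      rw [Real.dist_eq, abs_of_nonneg (sub_nonneg.2 hu.1)]
      gcongr
      exact hu.2
    _ < δ / 2 + δ / 2 := add_lt_add hb hk
    _ = δ := add_halves δ

section TrajectoryLimits

variable {n m : ℕ} {f : EuclideanSpace ℝ (Fin n) → Fin m → EuclideanSpace ℝ (Fin n)}
  {ι : Type*} {l : Filter ι} [l.NeBot] {x : ι → ℝ → EuclideanSpace ℝ (Fin n)}
  {σ : ι → ℝ → Fin m} {y : ℝ → EuclideanSpace ℝ (Fin n)} {ς : ℝ → Fin m}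

theorem IsTrajectory.of_tendsto (hf : ∀ γ, Continuous fun ξ => f ξ γ)
    (hσ : ∀ k, RightLocConst (σ k)) (hς : RightLocConst ς) (hx : ∀ k, IsTrajectory f (x k) (σ k))
    {L : ℝ≥0} (hL : ∀ k t, 0 ≤ t → ‖f (x k t) (σ k t)‖ ≤ L) (hσς : TendstoSignal σ l ς)
    (hxy : ∀ t, 0 ≤ t → Tendsto (fun k => x k t) l (𝓝 (y t))) : IsTrajectory f y ς := by
  have hxLip : ∀ k, LipschitzOnWith L (x k) (Ici 0) := fun k =>
    (hx k).lipschitzOnWith hf (hσ k) (hL k)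
  have hyLip : LipschitzOnWith L y (Ici 0) := .of_dist_le_mul fun a ha b hb =>
    le_of_tendsto ((hxy a ha).dist (hxy b hb)) (.of_forall fun k => (hxLip k).dist_le_mul a ha b hb)
  have hderiv := fun k => ((isTrajectory_iff_hasDerivWithinAt hf (hσ k)).1 (hx k)).2
  refine (isTrajectory_iff_hasDerivWithinAt hf hς).2 ⟨hyLip.continuousOn, fun t ht => ?_⟩
  have hsub : Ici t ⊆ Ici 0 := Ici_subset_Ici.2 ht
  refine hasDerivWithinAt_Ici_of_tendsto (fun k => (hx k).1.mono hsub)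
    (fun k s hs => hderiv k s (hsub hs)) (fun s hs => hxy s (hsub hs))
    ((hyLip.continuousOn t ht).mono (Ioi_subset_Ici_self.trans hsub)) fun ε hε => ?_
  have hnear : {ξ | ‖f ξ (ς t) - f (y t) (ς t)‖ ≤ ε} ∈ 𝓝 (y t) := by
    have hcont : Continuous fun ξ => ‖f ξ (ς t) - f (y t) (ς t)‖ :=
      ((hf (ς t)).sub continuous_const).norm
    exact hcont.continuousAt.eventually_le_const (by simpa using hε)
  filter_upwards [hσς t ht,
    eventually_forall_Icc_mem_of_lipschitzOnWith hxLip ht (hxy t ht) hnear]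
    with b hsignal hstate a ha
  filter_upwards [hsignal a ha, hstate] with k hσk hxk u hu
  rw [hσk u hu]
  exact hxk u ⟨ha.1.le.trans hu.1, hu.2⟩

theorem InTchi.of_tendsto {χ : Fin m → Set (EuclideanSpace ℝ (Fin n))}
    (hχ : ∀ γ, IsClosed (χ γ)) (hx : ∀ k, InTchi χ (x k) (σ k)) (hσς : TendstoSignal σ l ς)
    (hxy : ∀ t, 0 ≤ t → Tendsto (fun k => x k t) l (𝓝 (y t))) (hy : ContinuousOn y (Ici 0)) :
    InTchi χ y ς := by
  intro t ht
  have hycont : Tendsto y (𝓝[>] t) (𝓝 (y t)) :=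
    (hy t ht).mono fun u hu => ht.trans (le_of_lt hu)
  refine (hχ (ς t)).mem_of_tendsto hycont ?_
  filter_upwards [hσς.eventually_eq ht, self_mem_nhdsWithin] with u hu htu
  have hu0 : 0 ≤ u := ht.trans (le_of_lt htu)
  exact (hχ (ς t)).mem_of_tendsto (hxy u hu0) (hu.mono fun k hk => hk ▸ hx k u hu0)

end TrajectoryLimits

section LyapunovAlongTrajectories

variable {n m : ℕ} {f : EuclideanSpace ℝ (Fin n) → Fin m → EuclideanSpace ℝ (Fin n)}
  {χ : Fin m → Set (EuclideanSpace ℝ (Fin n))}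
  {T' : Set ((ℝ → EuclideanSpace ℝ (Fin n)) × (ℝ → Fin m))}
  {V : EuclideanSpace ℝ (Fin n) → Fin m → ℝ}

namespace IsWeakLyap

theorem apply_le_of_forall_notMem_switchTimes (hV : IsWeakLyap f χ T' V)
    (hf : ∀ γ, Continuous fun ξ => f ξ γ) {x : ℝ → EuclideanSpace ℝ (Fin n)} {σ : ℝ → Fin m}
    (hσ : RightLocConst σ) (hx : IsTrajectory f x σ) (hχ : InTchi χ x σ) {a b : ℝ} (ha : 0 ≤ a)
    (hab : a ≤ b) (h : ∀ u ∈ Ioo a b, u ∉ SwitchTimes σ) : V (x b) (σ a) ≤ V (x a) (σ a) := by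
  obtain ⟨hVsmooth, -, hVderiv, -⟩ := hV
  refine hx.comp_le hf hσ ((hVsmooth (σ a)).differentiable one_ne_zero) ha hab fun t ht => ?_
  have hat : σ a = σ t := hσ.eq_of_forall_notMem_switchTimes ha ht.1 fun u hu =>
    h u ⟨hu.1, hu.2.trans_lt ht.2⟩
  rw [hat]
  exact hVderiv _ _ (hχ t (ha.trans ht.1))

theorem inTV (hV : IsWeakLyap f χ T' V) (hf : ∀ γ, Continuous fun ξ => f ξ γ)
    {p : (ℝ → EuclideanSpace ℝ (Fin n)) × (ℝ → Fin m)} (hp : p ∈ T') (hx : IsTrajectory f p.1 p.2)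
    (hχ : InTchi χ p.1 p.2) {τD : ℝ} {N₀ : ℕ} (hτ : 0 < τD) (hσ : IsSwitchingSignal p.2 τD N₀) :
    InTV univ V p.1 p.2 := by
  refine ⟨fun _ _ => mem_univ _, fun t t' ht htt' heq => ?_⟩
  have hdecay := fun a b => hV.apply_le_of_forall_notMem_switchTimes hf hσ.1 hx hχ (a := a) (b := b)
  by_cases hnone : ∀ u ∈ Ioc t t', u ∉ SwitchTimes p.2
  · exact heq ▸ hdecay t t' ht htt' fun u hu => hnone u (Ioo_subset_Ioc_self hu)
  push Not at hnone
  obtain ⟨u, hu, huswitch⟩ := hnone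
  obtain ⟨s, hs, hst, hslast⟩ := hσ.exists_last_switchTime hτ ht
  obtain ⟨v, hv, hvt, hvnext⟩ := hσ.exists_next_switchTime hτ ht huswitch hu
  obtain ⟨s', hs', hst', hslast'⟩ := hσ.exists_last_switchTime hτ (ht.trans htt')
  have hσs : p.2 s = p.2 t := hσ.1.eq_of_forall_notMem_switchTimes hst.1 hst.2 hslast
  have hσs' : p.2 s' = p.2 t' := hσ.1.eq_of_forall_notMem_switchTimes hst'.1 hst'.2 hslast'
  have hvs' : v ≤ s' := not_lt.1 fun hlt => hslast' v ⟨hlt, hvt.2⟩ hv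
  have hts' : t < s' := hvt.1.trans_le hvs'
  have hs'switch : s' ∈ SwitchTimes p.2 := hs'.resolve_left (ht.trans_lt hts').ne'
  have hreturn : V (p.1 s') (p.2 s') ≤ V (p.1 v) (p.2 s) := by
    refine hV.2.2.2 p hp s v s' hs hv hs'switch (hst.2.trans_lt hvt.1) (fun w hw => ?_)
      (hst.2.trans_lt hts') (by rw [hσs, hσs', heq])
    rcases le_or_gt w t with hwt | hwt
    exacts [hslast w ⟨hw.1, hwt⟩, hvnext w ⟨hwt, hw.2⟩]
  calc V (p.1 t') (p.2 t') ≤ V (p.1 s') (p.2 s') := hσs' ▸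
        hdecay s' t' hst'.1 hst'.2 fun w hw => hslast' w (Ioo_subset_Ioc_self hw)
    _ ≤ V (p.1 v) (p.2 t) := hσs ▸ hreturn
    _ ≤ V (p.1 t) (p.2 t) := hdecay t v ht hvt.1.le hvnext

end IsWeakLyap

end LyapunovAlongTrajectories

theorem le_of_tendsto_comp_of_antitoneOn {ι X Y : Type*} [Preorder X] [Preorder Y]
    [TopologicalSpace Y] [ClosedIicTopology Y] [ClosedIciTopology Y] {l : Filter ι} [l.NeBot]
    {g : X → Y} {S : Set X} (hg : AntitoneOn g S) {c c' : ι → X} (hc : Tendsto c l atTop)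
    (hcS : ∀ᶠ k in l, c k ∈ S) (hcS' : ∀ᶠ k in l, c' k ∈ S) {A B : Y}
    (hA : Tendsto (g ∘ c) l (𝓝 A)) (hB : Tendsto (g ∘ c') l (𝓝 B)) : A ≤ B := by
  refine ge_of_tendsto hB (hcS'.mono fun j hj => le_of_tendsto hA ?_)
  filter_upwards [hcS, hc.eventually_ge_atTop (c' j)] with k hk hjk
  exact hg hj hk hjk

theorem InTVstar.of_tendsto_comp_const_add {n m : ℕ} {V : EuclideanSpace ℝ (Fin n) → Fin m → ℝ}
    {ι : Type*} {l : Filter ι} [l.NeBot] {x y : ℝ → EuclideanSpace ℝ (Fin n)} {σ ς : ℝ → Fin m}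
    {c : ι → ℝ} (hV : ∀ γ, Continuous fun ξ => V ξ γ) (hx : InTV univ V x σ)
    (hc : Tendsto c l atTop) (hσς : TendstoSignal (fun k t => σ (c k + t)) l ς)
    (hxy : ∀ t, 0 ≤ t → Tendsto (fun k => x (c k + t)) l (𝓝 (y t))) (hy : ContinuousOn y (Ici 0)) :
    InTVstar univ V y ς := by
  have hright : ∀ t γ, 0 ≤ t → Tendsto (fun u => V (y u) γ) (𝓝[>] t) (𝓝 (V (y t) γ)) :=
    fun t γ ht => (hV γ).continuousAt.comp_continuousWithinAt
      ((hy t ht).mono fun u hu => ht.trans (le_of_lt hu))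
  have hanti : ∀ γ, AntitoneOn (fun s => V (x s) γ) {s | 0 ≤ s ∧ σ s = γ} := by
    rintro γ s ⟨hs, rfl⟩ s' ⟨-, hs'⟩ hss'
    simpa only [hs'] using hx.2 s s' hs hss' hs'.symm
  have hmem : ∀ u γ, (∀ᶠ k in l, σ (c k + u) = γ) → ∀ᶠ k in l, c k + u ∈ {s | 0 ≤ s ∧ σ s = γ} :=
    fun u γ hu => ((tendsto_atTop_add_const_right l u hc).eventually_ge_atTop 0).and hu
  have hle : ∀ t t', 0 ≤ t → 0 ≤ t' → ς t = ς t' → V (y t) (ς t) ≤ V (y t') (ς t') := by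
    intro t t' ht ht' heq
    rw [← heq]
    refine le_of_tendsto (hright t _ ht) ?_
    filter_upwards [hσς.eventually_eq ht, self_mem_nhdsWithin] with u hu htu
    refine ge_of_tendsto (hright t' _ ht') ?_
    filter_upwards [hσς.eventually_eq ht', self_mem_nhdsWithin] with u' hu' htu'
    exact le_of_tendsto_comp_of_antitoneOn (hanti (ς t)) (tendsto_atTop_add_const_right l u hc)
      (hmem u _ hu) (hmem u' _ (heq ▸ hu'))
      ((hV _).continuousAt.tendsto.comp (hxy u (ht.trans (le_of_lt htu))))
      ((hV _).continuousAt.tendsto.comp (hxy u' (ht'.trans (le_of_lt htu'))))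
  have heq : ∀ t t', 0 ≤ t → 0 ≤ t' → ς t = ς t' → V (y t) (ς t) = V (y t') (ς t') :=
    fun t t' ht ht' h => le_antisymm (hle t t' ht ht' h) (hle t' t ht' ht h.symm)
  exact ⟨⟨fun _ _ => mem_univ _, fun t t' ht htt' h => (heq t t' ht (ht.trans htt') h).ge⟩, heq⟩

theorem exists_forall_norm_le_of_isCompact {X Γ F : Type*} [TopologicalSpace X] [Finite Γ]
    [SeminormedAddCommGroup F] {g : X → Γ → F} (hg : ∀ γ, Continuous fun ξ => g ξ γ) {K : Set X}
    (hK : IsCompact K) : ∃ L : ℝ≥0, ∀ ξ ∈ K, ∀ γ, ‖g ξ γ‖ ≤ L := by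
  let _ : TopologicalSpace Γ := ⊥
  have _ : DiscreteTopology Γ := ⟨rfl⟩
  have hcont : Continuous fun p : X × Γ => g p.1 p.2 := continuous_prod_of_discrete_right.2 hg
  obtain ⟨C, hC⟩ := (hK.prod finite_univ.isCompact).exists_bound_of_continuousOn hcont.continuousOn
  exact ⟨C.toNNReal, fun ξ hξ γ => (hC (ξ, γ) ⟨hξ, mem_univ γ⟩).trans (Real.le_coe_toNNReal C)⟩

section LimitTrajectories

variable {n m : ℕ} {f : EuclideanSpace ℝ (Fin n) → Fin m → EuclideanSpace ℝ (Fin n)}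
  {χ : Fin m → Set (EuclideanSpace ℝ (Fin n))} {V : EuclideanSpace ℝ (Fin n) → Fin m → ℝ}

/-- The family `𝒯_V* ∩ 𝒯[χ] ∩ 𝒯_a` of trajectories, along which `V` takes a single value for each
index. -/
def starTrajectories (f : EuclideanSpace ℝ (Fin n) → Fin m → EuclideanSpace ℝ (Fin n))
    (χ : Fin m → Set (EuclideanSpace ℝ (Fin n))) (V : EuclideanSpace ℝ (Fin n) → Fin m → ℝ) :
    Set ((ℝ → EuclideanSpace ℝ (Fin n)) × (ℝ → Fin m)) :=
  {q | IsTrajectory f q.1 q.2 ∧ InTchi χ q.1 q.2 ∧ InTVstar univ V q.1 q.2 ∧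
    ∃ τD : ℝ, 0 < τD ∧ ∃ N₀ : ℕ, IsSwitchingSignal q.2 τD N₀}

theorem comp_const_add_mem_starTrajectories (hf : ∀ γ, Continuous fun ξ => f ξ γ)
    {y : ℝ → EuclideanSpace ℝ (Fin n)} {ς : ℝ → Fin m} (hy : (y, ς) ∈ starTrajectories f χ V)
    {c : ℝ} (hc : 0 ≤ c) : (fun t => y (c + t), fun t => ς (c + t)) ∈ starTrajectories f χ V := by
  obtain ⟨hy, hχ, ⟨hTV, hstar⟩, τD, hτ, N₀, hς⟩ := hy
  have hcadd : ∀ {t}, 0 ≤ t → 0 ≤ c + t := add_nonneg hc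
  exact ⟨hy.comp_const_add hf hς.1 hc, fun t ht => hχ (c + t) (hcadd ht),
    ⟨⟨fun _ _ => mem_univ _, fun t t' ht htt' h =>
      hTV.2 (c + t) (c + t') (hcadd ht) (add_le_add_right htt' c) h⟩,
      fun t t' ht ht' h => hstar (c + t) (c + t') (hcadd ht) (hcadd ht') h⟩,
    τD, hτ, N₀, hς.comp_const_add hτ hc⟩

theorem weaklyInvariant_orbit (hf : ∀ γ, Continuous fun ξ => f ξ γ)
    {y : ℝ → EuclideanSpace ℝ (Fin n)} {ς : ℝ → Fin m} (hy : (y, ς) ∈ starTrajectories f χ V) :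
    WeaklyInvariant (starTrajectories f χ V) ((fun t => (y t, ς t)) '' Ici 0) := by
  rintro _ ⟨c, hc, rfl⟩
  exact ⟨_, comp_const_add_mem_starTrajectories hf hy hc, congrArg y (add_zero c),
    congrArg ς (add_zero c), fun t ht => ⟨c + t, add_nonneg hc ht, rfl⟩⟩

theorem exists_weaklyInvariant_of_mapClusterPt (hf : ∀ γ, Continuous fun ξ => f ξ γ)
    (hχ : ∀ γ, IsClosed (χ γ)) (hV : ∀ γ, Continuous fun ξ => V ξ γ)
    {x : ℝ → EuclideanSpace ℝ (Fin n)} {σ : ℝ → Fin m} (hx : IsTrajectory f x σ)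
    (hxχ : InTchi χ x σ) (hxV : InTV univ V x σ) {τD : ℝ} {N₀ : ℕ} (hτ : 0 < τD)
    (hσ : IsSwitchingSignal σ τD N₀) {R : ℝ} (hR : ∀ t, 0 ≤ t → ‖x t‖ ≤ R)
    {ξ : EuclideanSpace ℝ (Fin n)} (hξ : MapClusterPt ξ atTop x) :
    ∃ M, WeaklyInvariant (starTrajectories f χ V) M ∧ ∃ γ, (ξ, γ) ∈ M := by
  obtain ⟨U, hU, hUξ⟩ := mapClusterPt_iff_ultrafilter.1 hξ
  set c : ℝ → ℝ := fun k => max k 0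
  have hc0 : ∀ k, 0 ≤ c k := fun k => le_max_right k 0
  have hc : Tendsto c U atTop := tendsto_atTop_mono (fun k => le_max_left k 0) hU
  have hcadd : ∀ k {t}, 0 ≤ t → 0 ≤ c k + t := fun k t ht => add_nonneg (hc0 k) ht
  have hball : ∀ t, 0 ≤ t → x t ∈ closedBall 0 R := fun t ht => mem_closedBall_zero_iff.2 (hR t ht)
  have hK := isCompact_closedBall (0 : EuclideanSpace ℝ (Fin n)) R
  obtain ⟨L, hL⟩ := exists_forall_norm_le_of_isCompact hf hK
  have hlim : ∀ t, 0 ≤ t → ∃ η, Tendsto (fun k => x (c k + t)) U (𝓝 η) := fun t ht =>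
    let ⟨η, _, hη⟩ := hK.ultrafilter_le_nhds' (U.map fun k => x (c k + t))
      (Ultrafilter.mem_map.2 (univ_mem' fun k => hball _ (hcadd k ht)))
    ⟨η, hη⟩
  choose! y hxy using hlim
  have hσshift := fun k => hσ.comp_const_add hτ (hc0 k)
  obtain ⟨ς, hς, hσς⟩ := exists_tendstoSignal U hτ hσshift
  have hy : IsTrajectory f y ς := .of_tendsto hf (fun k => (hσshift k).1) hς.1
    (fun k => hx.comp_const_add hf hσ.1 (hc0 k))
    (fun k t ht => hL _ (hball _ (hcadd k ht)) _) hσς hxy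
  have hymem : (y, ς) ∈ starTrajectories f χ V :=
    ⟨hy, .of_tendsto hχ (fun k t ht => hxχ _ (hcadd k ht)) hσς hxy hy.1,
      .of_tendsto_comp_const_add hV hxV hc hσς hxy hy.1, τD, hτ, N₀, hς⟩
  have hξy : ξ = y 0 := by
    refine tendsto_nhds_unique (hUξ.congr' ?_) (hxy 0 le_rfl)
    filter_upwards [hU (Ici_mem_atTop 0)] with k hk
    rw [add_zero, show c k = k from max_eq_left hk]
  exact ⟨_, weaklyInvariant_orbit hf hymem, ς 0, 0, self_mem_Ici, by rw [hξy]⟩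

end LimitTrajectories

namespace IsKinf

theorem exists_orderIso {α : ℝ → ℝ} (h : IsKinf α) : ∃ e : ℝ ≃o ℝ, ∀ r, 0 ≤ r → e r = α r := by
  obtain ⟨hcont, hmono, hzero, htop⟩ := h
  set A : ℝ → ℝ := fun r => α (max r 0) + min r 0
  have hApos : ∀ r, 0 ≤ r → A r = α r := fun r hr => by simp [A, hr]
  have hAneg : ∀ r, r ≤ 0 → A r = r := fun r hr => by simp [A, hr, hzero]
  have hAmono : StrictMono A := by
    refine StrictMonoOn.Iic_union_Ici (a := 0) (fun r hr s hs hrs => ?_) (fun r hr s hs hrs => ?_)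
    · rwa [hAneg r hr, hAneg s hs]
    · rw [hApos r hr, hApos s hs]
      exact hmono hr hs hrs
  have hAtop : Tendsto A atTop atTop :=
    htop.congr' ((eventually_ge_atTop 0).mono fun r hr => (hApos r hr).symm)
  have hAbot : Tendsto A atBot atBot :=
    tendsto_id.congr' ((eventually_le_atBot 0).mono fun r hr => (hAneg r hr).symm)
  have hAcont : Continuous A := by fun_prop
  exact ⟨hAmono.orderIsoOfSurjective A (hAcont.surjective hAtop hAbot), hApos⟩

theorem exists_orderIso_comparison {α₁ α₂ : ℝ → ℝ} (h₁ : IsKinf α₁) (h₂ : IsKinf α₂) :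
    ∃ β : ℝ ≃o ℝ, β 0 = 0 ∧ ∀ r ρ, 0 ≤ r → 0 ≤ ρ → α₁ ρ ≤ α₂ r → ρ ≤ β r := by
  obtain ⟨e₁, he₁⟩ := h₁.exists_orderIso
  obtain ⟨e₂, he₂⟩ := h₂.exists_orderIso
  refine ⟨e₂.trans e₁.symm, ?_, fun r ρ hr hρ h => ?_⟩
  · rw [OrderIso.trans_apply, OrderIso.symm_apply_eq, he₁ 0 le_rfl, he₂ 0 le_rfl, h₁.2.2.1,
      h₂.2.2.1]
  · rw [OrderIso.trans_apply, OrderIso.le_symm_apply, he₁ ρ hρ, he₂ r hr]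
    exact h

end IsKinf

theorem isKinf_iterate_orderIso {β : ℝ ≃o ℝ} (h : β 0 = 0) (k : ℕ) : IsKinf β^[k] :=
  ⟨β.continuous.iterate k, (β.strictMono.iterate k).strictMonoOn _, Function.iterate_fixed h k,
    β.tendsto_atTop.iterate k⟩

-- Just before the first time the current mode is visited, at most `k` modes have been seen.
theorem le_iterate_of_forall_le_of_eq {Γ X : Type*} [Finite Γ] [Preorder X] [TopologicalSpace X]
    [ClosedIicTopology X] {σ : ℝ → Γ} (hσ : RightLocConst σ) {β : X → X} (hβ : Monotone β)
    {r : ℝ → X} {t₀ : ℝ} (hr : ContinuousOn r (Ici t₀))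
    (h : ∀ s t, t₀ ≤ s → s ≤ t → σ s = σ t → r t ≤ β (r s)) {k : ℕ} {t : ℝ} (ht : t₀ ≤ t)
    (hk : (σ '' Icc t₀ t).ncard ≤ k) : r t ≤ β^[k] (r t₀) := by
  induction k generalizing t with
  | zero =>
    have hempty := (Set.ncard_eq_zero (toFinite _)).1 (Nat.le_zero.1 hk)
    exact absurd hempty ((nonempty_Icc.2 ht).image σ).ne_empty
  | succ k ih =>
    obtain ⟨s, ⟨hs, hst⟩, hσs, hfirst⟩ := hσ.exists_first_time ht
    suffices hrs : r s ≤ β^[k] (r t₀) by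
      rw [Function.iterate_succ_apply']
      exact (h s t hs hst hσs).trans (hβ hrs)
    rcases hs.eq_or_lt with rfl | hs'
    · exact hβ.monotone_iterate_of_le_map (h t₀ t₀ le_rfl le_rfl rfl) k.zero_le
    have hcont : Tendsto r (𝓝[Ico t₀ s] s) (𝓝 (r s)) := (hr s hs).mono Ico_subset_Ici_self
    have hne : (𝓝[Ico t₀ s] s).NeBot := by
      rw [← mem_closure_iff_nhdsWithin_neBot, closure_Ico hs'.ne]
      exact right_mem_Icc.2 hs
    refine le_of_tendsto hcont (eventually_mem_nhdsWithin.mono fun u hu => ih hu.1 ?_)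
    have hssub : σ '' Icc t₀ u ⊂ σ '' Icc t₀ t := by
      refine ssubset_iff_exists.2 ⟨image_mono (Icc_subset_Icc_right (hu.2.le.trans hst)),
        σ t, mem_image_of_mem σ (right_mem_Icc.2 ht), ?_⟩
      rintro ⟨w, hw, hwt⟩
      exact hfirst w ⟨hw.1, hw.2.trans_lt hu.2⟩ hwt
    exact Nat.le_of_lt_succ ((Set.ncard_lt_ncard hssub (toFinite _)).trans_le hk)

theorem IsWeakLyap.exists_isKinf_norm_le {n m : ℕ}
    {f : EuclideanSpace ℝ (Fin n) → Fin m → EuclideanSpace ℝ (Fin n)}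
    {χ : Fin m → Set (EuclideanSpace ℝ (Fin n))}
    {T' : Set ((ℝ → EuclideanSpace ℝ (Fin n)) × (ℝ → Fin m))}
    {V : EuclideanSpace ℝ (Fin n) → Fin m → ℝ} (hV : IsWeakLyap f χ T' V) :
    ∃ α, IsKinf α ∧ ∀ x σ, ContinuousOn x (Ici 0) → RightLocConst σ → InTchi χ x σ →
      InTV univ V x σ → ∀ t₀ t, 0 ≤ t₀ → t₀ ≤ t → ‖x t‖ ≤ α ‖x t₀‖ := by
  obtain ⟨α₁, α₂, h₁, h₂, hα⟩ := hV.2.1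
  obtain ⟨β, hβ0, hβ⟩ := h₁.exists_orderIso_comparison h₂
  refine ⟨β^[m], isKinf_iterate_orderIso hβ0 m, fun x σ hx hσ hχ hxV t₀ t ht₀ ht => ?_⟩
  refine le_iterate_of_forall_le_of_eq hσ β.monotone (r := fun t => ‖x t‖)
    (hx.mono (Ici_subset_Ici.2 ht₀)).norm (fun s t hs hst heq => ?_) ht
    ((Set.ncard_le_card _).trans (Nat.card_fin m).le)
  have hs0 : 0 ≤ s := ht₀.trans hs
  refine hβ _ _ (norm_nonneg _) (norm_nonneg _) ?_
  calc α₁ ‖x t‖ ≤ V (x t) (σ t) := (hα _ _ (hχ t (hs0.trans hst))).1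
    _ ≤ V (x s) (σ s) := hxV.2 s t hs0 hst heq
    _ ≤ α₂ ‖x s‖ := (hα _ _ (hχ s hs0)).2

theorem stmt16_general {n m : ℕ}
    (f : EuclideanSpace ℝ (Fin n) → Fin m → EuclideanSpace ℝ (Fin n))
    (hf : ∀ γ : Fin m, Continuous (fun ξ => f ξ γ))
    (χ : Fin m → Set (EuclideanSpace ℝ (Fin n))) (hχcl : ∀ γ, IsClosed (χ γ))
    (T' : Set ((ℝ → EuclideanSpace ℝ (Fin n)) × (ℝ → Fin m)))
    (hT' : ∀ p ∈ T', IsTrajectory f p.1 p.2 ∧ InTchi χ p.1 p.2 ∧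
      ∃ τD : ℝ, 0 < τD ∧ ∃ N₀ : ℕ, IsSwitchingSignal p.2 τD N₀)
    (V : EuclideanSpace ℝ (Fin n) → Fin m → ℝ) (hV : IsWeakLyap f χ T' V)
    (hM : ∀ M, WeaklyInvariant (starTrajectories f χ V) M → ∀ q ∈ M, q.1 = 0) :
    (∃ α : ℝ → ℝ, IsKinf α ∧
      ∀ p ∈ T', ∀ t₀ t : ℝ, 0 ≤ t₀ → t₀ ≤ t → ‖p.1 t‖ ≤ α ‖p.1 t₀‖) ∧
    ∀ p ∈ T', Tendsto p.1 atTop (𝓝 0) := by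
  obtain ⟨α, hα, hbound⟩ := hV.exists_isKinf_norm_le
  have hstable : ∀ p ∈ T', ∀ t₀ t : ℝ, 0 ≤ t₀ → t₀ ≤ t → ‖p.1 t‖ ≤ α ‖p.1 t₀‖ := by
    intro p hp
    obtain ⟨hx, hχ, τD, hτ, N₀, hσ⟩ := hT' p hp
    exact hbound p.1 p.2 hx.1 hσ.1 hχ (hV.inTV hf hp hx hχ hτ hσ)
  refine ⟨⟨α, hα, hstable⟩, fun p hp => ?_⟩
  obtain ⟨hx, hχ, τD, hτ, N₀, hσ⟩ := hT' p hp
  have hR : ∀ t, 0 ≤ t → ‖p.1 t‖ ≤ α ‖p.1 0‖ := fun t ht => hstable p hp 0 t le_rfl ht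
  refine (isCompact_closedBall 0 (α ‖p.1 0‖)).tendsto_nhds_of_unique_mapClusterPt
    ((eventually_ge_atTop 0).mono fun t ht => mem_closedBall_zero_iff.2 (hR t ht)) fun ξ _ hξ => ?_
  obtain ⟨M, hMinv, γ, hξM⟩ := exists_weaklyInvariant_of_mapClusterPt hf hχcl
    (fun γ => (hV.1 γ).continuous) hx hχ (hV.inTV hf hp hx hχ hτ hσ) hτ hσ hR hξ
  exact hM M hMinv (ξ, γ) hξM

/-- asymptotic stability criterion: suppose `V` is a weak Lyapunov-like
function for `T'` (with `Ω = ℝⁿ`), every member of `T'` is a trajectory in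
`𝒯[χ] ∩ 𝒯_a`, `f(0,γ) = 0` for all `γ ∈ Γ* = {γ : 0 ∈ χ_γ}`, and
`M = {0} × Γ*` is the maximal weakly-invariant set with respect to
`𝒯_V^* ∩ 𝒯[χ] ∩ 𝒯_a`. Then `T'` is globally asymptotically stable: uniformly stable
and every state trajectory converges to `0`. -/
theorem stmt16 {n m : ℕ}
    (f : EuclideanSpace ℝ (Fin n) → Fin m → EuclideanSpace ℝ (Fin n))
    (hf : ∀ γ : Fin m, Continuous (fun ξ => f ξ γ))
    (χ : Fin m → Set (EuclideanSpace ℝ (Fin n)))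
    (hχcl : ∀ γ, IsClosed (χ γ)) (hχcov : (⋃ γ, χ γ) = Set.univ)
    (hf0 : ∀ γ : Fin m, (0 : EuclideanSpace ℝ (Fin n)) ∈ χ γ → f 0 γ = 0)
    (T' : Set ((ℝ → EuclideanSpace ℝ (Fin n)) × (ℝ → Fin m)))
    (hT' : ∀ p ∈ T', IsTrajectory f p.1 p.2 ∧ InTchi χ p.1 p.2 ∧
      ∃ τD : ℝ, 0 < τD ∧ ∃ N₀ : ℕ, IsSwitchingSignal p.2 τD N₀)
    (V : EuclideanSpace ℝ (Fin n) → Fin m → ℝ)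
    (hV : IsWeakLyap f χ T' V)
    (hMinv : WeaklyInvariant
      {q | IsTrajectory f q.1 q.2 ∧ InTchi χ q.1 q.2 ∧
        InTVstar Set.univ V q.1 q.2 ∧
        ∃ τD : ℝ, 0 < τD ∧ ∃ N₀ : ℕ, IsSwitchingSignal q.2 τD N₀}
      (({0} : Set (EuclideanSpace ℝ (Fin n))) ×ˢ
        {γ : Fin m | (0 : EuclideanSpace ℝ (Fin n)) ∈ χ γ}))
    (hMmax : ∀ M' : Set (EuclideanSpace ℝ (Fin n) × Fin m),
      WeaklyInvariant
        {q | IsTrajectory f q.1 q.2 ∧ InTchi χ q.1 q.2 ∧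
          InTVstar Set.univ V q.1 q.2 ∧
          ∃ τD : ℝ, 0 < τD ∧ ∃ N₀ : ℕ, IsSwitchingSignal q.2 τD N₀} M' →
      M' ⊆ (({0} : Set (EuclideanSpace ℝ (Fin n))) ×ˢ
        {γ : Fin m | (0 : EuclideanSpace ℝ (Fin n)) ∈ χ γ})) :
    (∃ α : ℝ → ℝ, IsKinf α ∧
      ∀ p ∈ T', ∀ t₀ t : ℝ, 0 ≤ t₀ → t₀ ≤ t → ‖p.1 t‖ ≤ α ‖p.1 t₀‖) ∧
    ∀ p ∈ T', Tendsto p.1 atTop (nhds 0) :=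
  stmt16_general f hf χ hχcl T' hT' V hV fun M hM _ hq => (hMmax M hM hq).1
end
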